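/- arXiv:2401.03050 — 2 statements merged into one kernel-verified Lean document; each statement's English description precedes it below -/
import Mathlib

section
/- Let (Δ, M) be a uniform boundary pair with M connected (so Δ is a one-ended word hyperbolic group with Gromov boundary ∂_∞Δ ≅ M), let k ∈ ℕ be odd, and let ρ : Δ → SL_{2k+1}(ℝ) be a k-Anosov representation, i.e., relatively k-Anosov with respect to (Δ, M). Then M embeds in the k-sphere: there exists a continuous injective map from M into the unit sphere S^k of EuclideanSpace ℝ (Fin (k+1)). -/
open Filter Topology Matrix

noncomputable instance projectivizationTopology
    {K V : Type*} [DivisionRing K] [AddCommGroup V] [Module K V] [TopologicalSpace V] :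
    TopologicalSpace (Projectivization K V) :=
  inferInstanceAs (TopologicalSpace (Quotient _))

/-- `g n • z → a` locally uniformly on `M ∖ {b}`. -/
def ConvLocUnif {Γ M : Type} [SMul Γ M] [TopologicalSpace M]
    (g : ℕ → Γ) (a b : M) : Prop :=
  ∀ K : Set M, IsCompact K → b ∉ K →
    ∀ U ∈ 𝓝 a, ∀ᶠ n in atTop, ∀ z ∈ K, g n • z ∈ U

/-- The action of `Γ` on `M` is an action by homeomorphisms with the convergence property. -/
def IsConvergenceAction (Γ M : Type) [Group Γ] [TopologicalSpace M] [MulAction Γ M] : Prop :=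
  (∀ γ : Γ, Continuous fun x : M => γ • x) ∧
  ∀ g : ℕ → Γ, Function.Injective g →
    ∃ φ : ℕ → ℕ, StrictMono φ ∧ ∃ a b : M, ConvLocUnif (fun n => g (φ n)) a b

def IsConicalLimitPoint (Γ : Type) {M : Type} [Group Γ] [TopologicalSpace M]
    [MulAction Γ M] (x : M) : Prop :=
  ∃ a b : M, a ≠ b ∧ ∃ g : ℕ → Γ,
    Tendsto (fun n => g n • x) atTop (𝓝 a) ∧
    ∀ y : M, y ≠ x → Tendsto (fun n => g n • y) atTop (𝓝 b)

def IsBoundedParabolicPoint (Γ : Type) {M : Type} [Group Γ] [TopologicalSpace M]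
    [MulAction Γ M] (x : M) : Prop :=
  Infinite (MulAction.stabilizer Γ x) ∧
  (∀ y : M, (∀ γ ∈ MulAction.stabilizer Γ x, γ • y = y) → y = x) ∧
  (∃ K : Set M, IsCompact K ∧ x ∉ K ∧
    ∀ y : M, y ≠ x → ∃ γ ∈ MulAction.stabilizer Γ x, γ • y ∈ K)

/-- `(Γ, M)` is a boundary pair: `Γ` is a finitely generated group acting as a geometrically
finite convergence group on the perfect compact metrizable space `M`. -/
structure IsBoundaryPair (Γ M : Type) [Group Γ] [TopologicalSpace M] [MulAction Γ M] : Prop where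
  fg : Group.FG Γ
  compact : CompactSpace M
  metrizable : TopologicalSpace.MetrizableSpace M
  perfect : ∀ x : M, Filter.NeBot (𝓝[≠] x)
  conv : IsConvergenceAction Γ M
  gf : ∀ x : M, IsConicalLimitPoint Γ x ∨
    (IsBoundedParabolicPoint Γ x ∧ Group.FG (MulAction.stabilizer Γ x))

/-- The linear functional on the exterior algebra of `K^d` extracting the top-degree
coefficient: it sends `v₁ ∧ ⋯ ∧ v_d` to `det (v₁, …, v_d)` and is zero in other degrees. -/
noncomputable def topDegreeDet (K : Type*) [Field K] (d : ℕ) :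
    ExteriorAlgebra K (Fin d → K) →ₗ[K] K :=
  ExteriorAlgebra.liftAlternating
    (fun i => if h : i = d then by subst h; exact Matrix.detRowAlternating else 0)

/-- The wedge of the standard basis vectors indexed by `s`, in increasing order. -/
noncomputable def stdBasisWedge (K : Type*) [Field K] {d : ℕ} (s : Finset (Fin d)) :
    ExteriorAlgebra K (Fin d → K) :=
  ((s.sort (· ≤ ·)).map fun j => ExteriorAlgebra.ι K (Pi.single j (1 : K))).prod

/-- The Plücker coordinates of an element of the exterior algebra of `K^d`, obtained by
wedging with complementary standard basis wedges and extracting the top coefficient. -/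
noncomputable def extCoordinates (K : Type*) [Field K] (d : ℕ) :
    ExteriorAlgebra K (Fin d → K) →ₗ[K] (Finset (Fin d) → K) :=
  LinearMap.pi fun s => (topDegreeDet K d).comp (LinearMap.mulRight K (stdBasisWedge K s))

/-- The standard topology on the `k`-th exterior power of `K^d`, induced by Plücker
coordinates. -/
noncomputable instance exteriorPowerTopology (K : Type*) [Field K] [TopologicalSpace K]
    (d k : ℕ) : TopologicalSpace (⋀[K]^k (Fin d → K)) :=
  TopologicalSpace.induced
    (fun ω => extCoordinates K d (↑ω : ExteriorAlgebra K (Fin d → K))) inferInstance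

/-- `v₁ ∧ ⋯ ∧ v_k` as an element of the `k`-th exterior power. -/
noncomputable def wedgeMk (K : Type*) {V : Type*} [CommRing K] [AddCommGroup V] [Module K V]
    (k : ℕ) (v : Fin k → V) : ⋀[K]^k V :=
  ⟨ExteriorAlgebra.ιMulti K k v, ExteriorAlgebra.ιMulti_range K k (Set.mem_range_self v)⟩

/-- A relatively `k`-Anosov representation into `SL_d(ℝ)`, in the Plücker formulation:
limit maps into the projectivizations of the exterior powers `⋀^k ℝ^d` and `⋀^{d-k} ℝ^d`,
taking decomposable values, equivariant, transverse and strongly dynamics-preserving. -/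
structure IsRelAnosov {Γ M : Type} [Group Γ] [TopologicalSpace M] [MulAction Γ M] {d : ℕ}
    (k : ℕ) (ρ : Γ →* Matrix.SpecialLinearGroup (Fin d) ℝ)
    (ξk : M → Projectivization ℝ (⋀[ℝ]^k (Fin d → ℝ)))
    (ξdk : M → Projectivization ℝ (⋀[ℝ]^(d - k) (Fin d → ℝ))) : Prop where
  continuous_fst : Continuous ξk
  continuous_snd : Continuous ξdk
  decomposable_fst : ∀ x : M, ∃ (v : Fin k → (Fin d → ℝ)) (_ : LinearIndependent ℝ v)
      (hne : wedgeMk ℝ k v ≠ 0), ξk x = Projectivization.mk ℝ (wedgeMk ℝ k v) hne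
  decomposable_snd : ∀ x : M, ∃ (w : Fin (d - k) → (Fin d → ℝ)) (_ : LinearIndependent ℝ w)
      (hne : wedgeMk ℝ (d - k) w ≠ 0), ξdk x = Projectivization.mk ℝ (wedgeMk ℝ (d - k) w) hne
  equivariant_fst : ∀ (γ : Γ) (x : M) (v : Fin k → (Fin d → ℝ))
      (hne : wedgeMk ℝ k v ≠ 0)
      (hne' : wedgeMk ℝ k (fun i => (ρ γ : Matrix (Fin d) (Fin d) ℝ) *ᵥ v i) ≠ 0),
      ξk x = Projectivization.mk ℝ (wedgeMk ℝ k v) hne →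
      ξk (γ • x) = Projectivization.mk ℝ
        (wedgeMk ℝ k (fun i => (ρ γ : Matrix (Fin d) (Fin d) ℝ) *ᵥ v i)) hne'
  equivariant_snd : ∀ (γ : Γ) (x : M) (w : Fin (d - k) → (Fin d → ℝ))
      (hne : wedgeMk ℝ (d - k) w ≠ 0)
      (hne' : wedgeMk ℝ (d - k) (fun i => (ρ γ : Matrix (Fin d) (Fin d) ℝ) *ᵥ w i) ≠ 0),
      ξdk x = Projectivization.mk ℝ (wedgeMk ℝ (d - k) w) hne →
      ξdk (γ • x) = Projectivization.mk ℝ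
        (wedgeMk ℝ (d - k) (fun i => (ρ γ : Matrix (Fin d) (Fin d) ℝ) *ᵥ w i)) hne'
  transverse : ∀ (x y : M), x ≠ y → ∀ (v : Fin k → (Fin d → ℝ)) (w : Fin (d - k) → (Fin d → ℝ))
      (hv : wedgeMk ℝ k v ≠ 0) (hw : wedgeMk ℝ (d - k) w ≠ 0),
      ξk x = Projectivization.mk ℝ (wedgeMk ℝ k v) hv →
      ξdk y = Projectivization.mk ℝ (wedgeMk ℝ (d - k) w) hw →
      ((wedgeMk ℝ k v : ⋀[ℝ]^k (Fin d → ℝ)) : ExteriorAlgebra ℝ (Fin d → ℝ)) *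
        ((wedgeMk ℝ (d - k) w : ⋀[ℝ]^(d - k) (Fin d → ℝ)) : ExteriorAlgebra ℝ (Fin d → ℝ)) ≠ 0
  dynamics : ∀ (g : ℕ → Γ) (x y : M),
      (∀ z : M, z ≠ y → Tendsto (fun n => g n • z) atTop (𝓝 x)) →
      (∀ z : M, z ≠ x → Tendsto (fun n => (g n)⁻¹ • z) atTop (𝓝 y)) →
      ∀ (w : Fin (d - k) → (Fin d → ℝ)) (hw : wedgeMk ℝ (d - k) w ≠ 0),
      ξdk y = Projectivization.mk ℝ (wedgeMk ℝ (d - k) w) hw →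
      ∀ (u : Fin k → (Fin d → ℝ))
        (hu : ∀ n, wedgeMk ℝ k (fun i => (ρ (g n) : Matrix (Fin d) (Fin d) ℝ) *ᵥ u i) ≠ 0),
        ((wedgeMk ℝ k u : ⋀[ℝ]^k (Fin d → ℝ)) : ExteriorAlgebra ℝ (Fin d → ℝ)) *
          ((wedgeMk ℝ (d - k) w : ⋀[ℝ]^(d - k) (Fin d → ℝ)) : ExteriorAlgebra ℝ (Fin d → ℝ)) ≠ 0 →
        Tendsto (fun n => Projectivization.mk ℝ
            (wedgeMk ℝ k (fun i => (ρ (g n) : Matrix (Fin d) (Fin d) ℝ) *ᵥ u i)) (hu n))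
          atTop (𝓝 (ξk x))

/-!
Write `P x ⊆ ℝ^{2k+1}` for the `k`-plane and `W x` for the `(k+1)`-plane of the limit maps at `x`.
Conical limit points satisfy `P x ⊆ W x`. Choose `o` such that `M ∖ {o}` is connected, and let
`q y z` be the determinant of `P y` against `W z`, normalized at `o` so that it does not depend on
the frames. The symmetric function `q y z * q z y` has constant sign off the diagonal.
If it is negative, the sign of `q` is a total order on `M ∖ {o}`, compatible with its topology, and
`M ∖ {o}` embeds properly in `ℝ`. If it is positive, oddness of `k` makes the intersection points of
the subspaces `W y`, `y ≠ o`, with an affine copy of `P o` in `W o` pairwise distinct, and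
`M ∖ {o}` embeds properly in `P o ≅ ℝ^k`. The one-point compactification of either embedding is a
map from `M` to a sphere.
-/

section CutPoints

variable {F : Type*} [TopologicalSpace F]

/-- A separation of the complement of the point `y` into two disjoint open sets `N` and `S`, either
of which may be empty. -/
structure IsCut (y : F) (N S : Set F) : Prop where
  isOpen_left : IsOpen N
  isOpen_right : IsOpen S
  disjoint : Disjoint N S
  union_eq : N ∪ S = {y}ᶜ

namespace IsCut

variable {y p : F} {N S U V : Set F}

theorem symm (h : IsCut y N S) : IsCut y S N :=
  ⟨h.isOpen_right, h.isOpen_left, h.disjoint.symm, (Set.union_comm S N).trans h.union_eq⟩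

theorem notMem_left (h : IsCut y N S) : y ∉ N := fun hy =>
  (h.union_eq.subset (Or.inl hy) : y ∈ ({y}ᶜ : Set F)) rfl

theorem insert_left_eq (h : IsCut y N S) : insert y N = Sᶜ := by
  have hdisj : Disjoint (insert y N) S :=
    Set.disjoint_insert_left.2 ⟨h.symm.notMem_left, h.disjoint⟩
  refine (IsCompl.of_eq hdisj.eq_bot ?_).eq_compl
  calc insert y N ∪ S = insert y {y}ᶜ := by rw [Set.insert_union, h.union_eq]
    _ = Set.univ := by rw [Set.insert_eq, Set.union_compl_self]

theorem isClosed_insert_left (h : IsCut y N S) : IsClosed (insert y N) :=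
  h.insert_left_eq ▸ h.isOpen_right.isClosed_compl

/-- The map collapsing `S` to the point `y` is a retraction onto `insert y N`. -/
theorem isPreconnected_insert_left [PreconnectedSpace F] (h : IsCut y N S) :
    IsPreconnected (insert y N) := by
  classical
  have hfrontier : frontier S ⊆ {y} := by
    rintro z ⟨hz, hz'⟩
    rw [h.isOpen_right.interior_eq] at hz'
    have := closure_minimal (Set.subset_insert y S) h.symm.isClosed_insert_left hz
    exact this.resolve_right hz'
  have hcont : Continuous (S.piecewise (fun _ => y) id) :=
    Continuous.piecewise (fun z hz => (hfrontier hz).symm) continuous_const continuous_id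
  have hrange : Set.range (S.piecewise (fun _ => y) id) = insert y N := by
    refine Set.Subset.antisymm ?_ fun z hz => ⟨z, ?_⟩
    · rintro _ ⟨z, rfl⟩
      by_cases hz : z ∈ S
      · simp [hz]
      · simpa [hz] using h.insert_left_eq.superset hz
    · rw [h.insert_left_eq] at hz
      simp [show z ∉ S from hz]
  exact hrange ▸ isPreconnected_range hcont

theorem insert_right_subset_right [PreconnectedSpace F] (hy : IsCut y N S) (hp : IsCut p U V)
    (hpN : p ∈ N) (hmeet : (insert y S ∩ V).Nonempty) : insert y S ⊆ V := by
  refine hy.symm.isPreconnected_insert_left.subset_right_of_subset_union hp.isOpen_left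
    hp.isOpen_right hp.disjoint ?_ hmeet
  rw [hp.union_eq, Set.subset_compl_singleton_iff, hy.symm.insert_left_eq]
  exact not_not.2 hpN

theorem insert_left_subset_left [PreconnectedSpace F] (hy : IsCut y N S) (hp : IsCut p U V)
    (hpN : p ∈ N) (hmeet : (insert y S ∩ V).Nonempty) : insert p U ⊆ N := by
  have hsub := Set.compl_subset_compl.2 (hy.insert_right_subset_right hp hpN hmeet)
  rwa [← hp.insert_left_eq, hy.symm.insert_left_eq, compl_compl] at hsub

end IsCut

theorem exists_isCut_of_not_isPreconnected [T1Space F] {y : F}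
    (h : ¬ IsPreconnected ({y}ᶜ : Set F)) :
    ∃ N S : Set F, IsCut y N S ∧ N.Nonempty ∧ S.Nonempty := by
  rw [IsPreconnected] at h
  push Not at h
  obtain ⟨A, B, hA, hB, hAB, hnA, hnB, hemp⟩ := h
  have ho : IsOpen ({y}ᶜ : Set F) := isOpen_compl_singleton
  refine ⟨{y}ᶜ ∩ A, {y}ᶜ ∩ B, ⟨ho.inter hA, ho.inter hB, ?_, ?_⟩, hnA, hnB⟩
  · rw [Set.disjoint_iff_inter_eq_empty, ← Set.inter_inter_distrib_left, hemp]
  · rw [← Set.inter_union_distrib_left, Set.inter_eq_left.2 hAB]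

/-- Zorn's lemma for the preorder `p ≤ y ↔ p ∈ K y`, whose chains are bounded below by
compactness. -/
theorem exists_minimal_of_forall_isCompact [T2Space F] {s : Set F} (hs : s.Nonempty)
    {K : F → Set F} (hcpt : ∀ y ∈ s, IsCompact (K y)) (hmem : ∀ y ∈ s, y ∈ K y)
    (hKs : ∀ y ∈ s, K y ⊆ s) (htrans : ∀ y ∈ s, ∀ p ∈ K y, K p ⊆ K y) :
    ∃ y ∈ s, ∀ p ∈ K y, K y ⊆ K p := by
  have : Nonempty s := hs.to_subtype
  let r : s → s → Prop := fun a b => K b ⊆ K a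
  have hbdd : ∀ c : Set s, IsChain r c → c.Nonempty → ∃ p : s, ∀ a ∈ c, r a p := by
    intro c hc hne
    have := hne.to_subtype
    have hdir : Directed (· ⊇ ·) fun a : c => K a := fun a b => by
      rcases hc.total a.2 b.2 with h | h
      · exact ⟨b, h, subset_rfl⟩
      · exact ⟨a, subset_rfl, h⟩
    obtain ⟨p, hp⟩ := IsCompact.nonempty_iInter_of_directed_nonempty_isCompact_isClosed _ hdir
      (fun a => ⟨a, hmem _ a.1.2⟩) (fun a => hcpt _ a.1.2) (fun a => (hcpt _ a.1.2).isClosed)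
    rw [Set.mem_iInter] at hp
    obtain ⟨a, ha⟩ := hne
    exact ⟨⟨p, hKs _ a.2 (hp ⟨a, ha⟩)⟩, fun b hb => htrans _ b.2 p (hp ⟨b, hb⟩)⟩
  obtain ⟨⟨y, hy⟩, hmax⟩ :=
    exists_maximal_of_nonempty_chains_bounded hbdd fun hab hbc => hbc.trans hab
  exact ⟨y, hy, fun p hp => hmax ⟨p, hKs y hy hp⟩ (htrans y hy p hp)⟩

theorem exists_isPreconnected_compl_singleton [CompactSpace F] [T2Space F] [ConnectedSpace F] :
    ∃ x : F, IsPreconnected ({x}ᶜ : Set F) := by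
  by_contra! hcon
  obtain ⟨x⟩ := (inferInstance : Nonempty F)
  have hcut : ∀ y : F, ∃ N S : Set F, IsCut y N S ∧ N.Nonempty ∧ (y ≠ x → x ∈ S) := by
    intro y
    obtain ⟨N, S, h, hN, hS⟩ := exists_isCut_of_not_isPreconnected (hcon y)
    by_cases hx : x ∈ N
    · exact ⟨S, N, h.symm, hS, fun _ => hx⟩
    · exact ⟨N, S, h, hN, fun hyx => (h.union_eq.superset hyx.symm).resolve_left hx⟩
  choose N S hNS hN hxS using hcut
  have hx_notMem : ∀ y ≠ x, x ∉ insert y (N y) := fun y hy => by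
    rw [(hNS y).insert_left_eq]
    exact not_not.2 (hxS y hy)
  have hnest : ∀ y ≠ x, ∀ p ∈ N y, insert p (N p) ⊆ N y := fun y hy p hp =>
    (hNS y).insert_left_subset_left (hNS p) hp
      ⟨x, Or.inr (hxS y hy), hxS p fun hpx => hx_notMem y hy (Or.inr (hpx ▸ hp))⟩
  have hne : ({x}ᶜ : Set F).Nonempty := (hN x).mono
    ((Set.subset_union_left).trans (hNS x).union_eq.subset)
  obtain ⟨y, hy, hmin⟩ := exists_minimal_of_forall_isCompact hne (K := fun y => insert y (N y))
    (fun y _ => (hNS y).isClosed_insert_left.isCompact) (fun y _ => Set.mem_insert _ _)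
    (fun y hy => Set.subset_compl_singleton_iff.2 (hx_notMem y hy)) fun y hy p hp => by
      rcases hp with rfl | hp
      · exact subset_rfl
      · exact (hnest y hy p hp).trans (Set.subset_insert _ _)
  obtain ⟨p, hp⟩ := hN y
  exact (hNS y).notMem_left
    (hnest y hy p hp (hmin p (Or.inr hp) (Set.mem_insert _ _)))

theorem isCut_of_continuous_of_ne_zero [T1Space F] {h : F → ℝ} (hcont : Continuous h) {y : F}
    (hne : ∀ z ≠ y, h z ≠ 0) : IsCut y {z | z ≠ y ∧ 0 < h z} {z | z ≠ y ∧ h z < 0} where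
  isOpen_left := isOpen_ne.inter (isOpen_lt continuous_const hcont)
  isOpen_right := isOpen_ne.inter (isOpen_lt hcont continuous_const)
  disjoint := Set.disjoint_left.2 fun _ hpos hneg => hpos.2.not_gt hneg.2
  union_eq := Set.ext fun z =>
    ⟨fun hz => hz.elim And.left And.left,
      fun hz => (hne z hz).lt_or_gt.symm.imp (⟨hz, ·⟩) (⟨hz, ·⟩)⟩

/-- If `f y` takes both signs, at `z` and `w`, then `y` cuts `F` into two pieces and each of
`z`, `w` sees the piece of the other one with the sign it attributes to `y`, so
`f z w < 0 < f w z`. -/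
theorem forall_pos_or_forall_neg_of_symm [T1Space F] [PreconnectedSpace F] {f : F → F → ℝ}
    (hsymm : ∀ y z, f y z = f z y) (hcont : ∀ y, Continuous (f y))
    (hne : ∀ y z, y ≠ z → f y z ≠ 0) :
    (∀ y z, y ≠ z → 0 < f y z) ∨ (∀ y z, y ≠ z → f y z < 0) := by
  have hcut y := isCut_of_continuous_of_ne_zero (hcont y) fun z hz => hne y z hz.symm
  have hsame : ∀ y z w, y ≠ z → y ≠ w → f y z < 0 → ¬ 0 < f y w := by
    intro y z w hyz hyw hz hw
    have hzw := (hcut y).symm.insert_right_subset_right (hcut z) ⟨hyz.symm, hz⟩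
      ⟨y, Set.mem_insert _ _, hyz, hsymm y z ▸ hz⟩ (Or.inr ⟨hyw.symm, hw⟩)
    have hwz := (hcut y).insert_right_subset_right (hcut w).symm ⟨hyw.symm, hw⟩
      ⟨y, Set.mem_insert _ _, hyw, hsymm y w ▸ hw⟩ (Or.inr ⟨hyz.symm, hz⟩)
    exact hzw.2.not_gt (hsymm w z ▸ hwz.2)
  by_contra! h
  obtain ⟨⟨y, z, hyz, hneg⟩, y', z', hyz', hpos⟩ := h
  replace hneg := lt_of_le_of_ne hneg (hne y z hyz)
  replace hpos := lt_of_le_of_ne hpos (hne y' z' hyz').symm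
  by_cases hy : y = y'
  · exact hsame y z z' hyz (hy ▸ hyz') hneg (hy ▸ hpos)
  · rcases (hne y y' hy).lt_or_gt with h | h
    · exact hsame y' y z' (Ne.symm hy) hyz' (hsymm y y' ▸ h) hpos
    · exact hsame y z y' hyz hy hneg h

end CutPoints

section OrderEmbedding

variable {F : Type*} [TopologicalSpace F] [LinearOrder F]

section

variable [ClosedIicTopology F] [ClosedIciTopology F]

theorem exists_orderDense_orderIso_Ioo_rat [PreconnectedSpace F]
    [TopologicalSpace.SeparableSpace F] [Nontrivial F] :
    ∃ D : Set F, (∀ a b : F, a < b → ∃ d : D, a < d ∧ d < b) ∧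
      Nonempty (D ≃o Set.Ioo (0 : ℚ) 1) := by
  have : DenselyOrdered F := ⟨fun a b hab => by
    obtain ⟨z, -, hz⟩ := isPreconnected_univ (Set.Ioi a) (Set.Iio b) isOpen_Ioi isOpen_Iio
      (fun z _ => (lt_or_ge a z).imp_right fun h => h.trans_lt hab) ⟨b, trivial, hab⟩
      ⟨a, trivial, hab⟩
    exact ⟨z, hz⟩⟩
  obtain ⟨s, hs, hsd⟩ := TopologicalSpace.exists_countable_dense F
  let D : Set F := {d ∈ s | (∃ a, a < d) ∧ ∃ b, d < b}
  have hD : ∀ a b : F, a < b → ∃ d : D, a < d ∧ d < b := fun a b hab => by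
    obtain ⟨d, hd, hds⟩ := hsd.inter_open_nonempty (Set.Ioo a b) (isOpen_Ioi.inter isOpen_Iio)
      (Set.nonempty_Ioo.2 hab)
    exact ⟨⟨d, hds, ⟨a, hd.1⟩, ⟨b, hd.2⟩⟩, hd⟩
  have : Countable D := (hs.mono fun d hd => hd.1).to_subtype
  have : DenselyOrdered D := ⟨fun a b hab => hD a b hab⟩
  have : NoMinOrder D := ⟨fun d => by
    obtain ⟨a, ha⟩ := d.2.2.1
    obtain ⟨d', -, h⟩ := hD a d ha
    exact ⟨d', h⟩⟩
  have : NoMaxOrder D := ⟨fun d => by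
    obtain ⟨b, hb⟩ := d.2.2.2
    obtain ⟨d', h, -⟩ := hD d b hb
    exact ⟨d', h⟩⟩
  have : Nonempty D := by
    obtain ⟨a, b, hab⟩ := exists_pair_lt F
    exact (hD a b hab).nonempty
  have : Nonempty (Set.Ioo (0 : ℚ) 1) := (Set.nonempty_Ioo.2 one_pos).to_subtype
  exact ⟨D, hD, Order.iso_of_countable_dense D (Set.Ioo (0 : ℚ) 1)⟩

theorem continuous_of_orderDense_orderIso_Ioo_rat {D : Set F} (e : D ≃o Set.Ioo (0 : ℚ) 1)
    {φ : F → ℝ} (hφ : ∀ y, φ y ∈ Set.Icc (0 : ℝ) 1)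
    (hle : ∀ (d : D) (y : F), d < y → (e d : ℚ) ≤ φ y)
    (hge : ∀ (d : D) (y : F), y ≤ d → φ y ≤ (e d : ℚ)) : Continuous φ := by
  have hbtwn : ∀ a b : ℝ, 0 ≤ a → b ≤ 1 → a < b → ∃ d : D, a < (e d : ℚ) ∧ (e d : ℚ) < b := by
    intro a b ha hb hab
    obtain ⟨q, haq, hqb⟩ := exists_rat_btwn hab
    have hq : q ∈ Set.Ioo (0 : ℚ) 1 :=
      ⟨by exact_mod_cast ha.trans_lt haq, by exact_mod_cast hqb.trans_le hb⟩
    exact ⟨e.symm ⟨q, hq⟩, by simpa using haq, by simpa using hqb⟩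
  refine continuous_iff_continuousAt.2 fun y => tendsto_order.2 ⟨fun c hc => ?_, fun c hc => ?_⟩
  · rcases lt_or_ge c 0 with h0 | h0
    · exact Eventually.of_forall fun z => h0.trans_le (hφ z).1
    obtain ⟨d, hcd, hdy⟩ := hbtwn c (φ y) h0 (hφ y).2 hc
    filter_upwards [isOpen_Ioi.mem_nhds (lt_of_not_ge fun h => (hge d y h).not_gt hdy)] with z hz
    exact hcd.trans_le (hle d z hz)
  · rcases lt_or_ge 1 c with h1 | h1
    · exact Eventually.of_forall fun z => (hφ z).2.trans_lt h1
    obtain ⟨d, hyd, hdc⟩ := hbtwn (φ y) c (hφ y).1 h1 hc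
    obtain ⟨d', hdd', hdc'⟩ := hbtwn (e d : ℚ) c ((hφ y).1.trans hyd.le) h1 hdc
    have hyd' : y < d' := (le_of_not_gt fun h => (hle d y h).not_gt hyd).trans_lt
      (e.lt_iff_lt.1 (by exact_mod_cast hdd') : d < d')
    filter_upwards [isOpen_Iio.mem_nhds hyd'] with z hz
    exact (hge d' z (le_of_lt hz)).trans_lt hdc'

theorem exists_continuous_strictMono_mem_Icc [PreconnectedSpace F]
    [TopologicalSpace.SeparableSpace F] [Nontrivial F] :
    ∃ φ : F → ℝ, Continuous φ ∧ StrictMono φ ∧ ∀ y, φ y ∈ Set.Icc (0 : ℝ) 1 := by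
  obtain ⟨D, hD, ⟨e⟩⟩ := exists_orderDense_orderIso_Ioo_rat (F := F)
  have he : ∀ d, ((e d : ℚ) : ℝ) ∈ Set.Icc (0 : ℝ) 1 := fun d =>
    ⟨by exact_mod_cast (e d).2.1.le, by exact_mod_cast (e d).2.2.le⟩
  let φ : F → ℝ := fun y => sSup ((fun d : D => ((e d : ℚ) : ℝ)) '' {d | d < y})
  have hle : ∀ (d : D) (y : F), d < y → (e d : ℚ) ≤ φ y := fun d y h =>
    le_csSup ⟨1, Set.forall_mem_image.2 fun d _ => (he d).2⟩ ⟨d, h, rfl⟩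
  have hge : ∀ (d : D) (y : F), y ≤ d → φ y ≤ (e d : ℚ) := fun d y h =>
    Real.sSup_le (Set.forall_mem_image.2 fun d' hd' => by
      exact_mod_cast e.monotone (hd'.le.trans h : (d' : F) ≤ d)) (he d).1
  have hφ : ∀ y, φ y ∈ Set.Icc (0 : ℝ) 1 := fun y =>
    ⟨Real.sSup_nonneg (Set.forall_mem_image.2 fun d _ => (he d).1),
      Real.sSup_le (Set.forall_mem_image.2 fun d _ => (he d).2) zero_le_one⟩
  refine ⟨φ, continuous_of_orderDense_orderIso_Ioo_rat e hφ hle hge, fun y z hyz => ?_, hφ⟩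
  obtain ⟨d, hyd, hdz⟩ := hD y z hyz
  obtain ⟨d', hdd', hdz'⟩ := hD d z hdz
  calc φ y ≤ (e d : ℚ) := hge d y hyd.le
    _ < (e d' : ℚ) := by exact_mod_cast e.strictMono (hdd' : d < d')
    _ ≤ φ z := hle d' z hdz'

end

/-- If `F` has no greatest element, take `(sup φ - φ)⁻¹`. -/
theorem exists_continuous_strictMono_forall_exists_le [Nonempty F] {φ : F → ℝ}
    (hφ : Continuous φ) (hmono : StrictMono φ) (hbdd : BddAbove (Set.range φ)) :
    ∃ u : F → ℝ, Continuous u ∧ StrictMono u ∧ ∀ c, ∃ d, ∀ y, d < y → c ≤ u y := by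
  by_cases hmax : ∃ m : F, ∀ y, y ≤ m
  · obtain ⟨m, hm⟩ := hmax
    exact ⟨φ, hφ, hmono, fun c => ⟨m, fun y hy => absurd (hm y) hy.not_ge⟩⟩
  push Not at hmax
  have hlt : ∀ y, 0 < (⨆ z, φ z) - φ y := fun y => by
    obtain ⟨z, hz⟩ := hmax y
    exact sub_pos.2 ((hmono hz).trans_le (le_ciSup hbdd z))
  refine ⟨fun y => ((⨆ z, φ z) - φ y)⁻¹, (continuous_const.sub hφ).inv₀ fun y => (hlt y).ne',
    fun y z hyz => inv_strictAnti₀ (hlt z) (sub_lt_sub_left (hmono hyz) _), fun c => ?_⟩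
  have hc : 0 < max c 1 := zero_lt_one.trans_le (le_max_right c 1)
  obtain ⟨d, hd⟩ := exists_lt_of_lt_ciSup (sub_lt_self (⨆ z, φ z) (inv_pos.2 hc))
  refine ⟨d, fun y hy => (le_max_left c 1).trans ?_⟩
  rw [le_inv_comm₀ hc (hlt y)]
  linarith [hmono hy]

theorem exists_continuous_strictMono_tendsto_cocompact [ClosedIicTopology F] [ClosedIciTopology F]
    [PreconnectedSpace F] [TopologicalSpace.SeparableSpace F] {l : Filter F} [l.NeBot]
    (hend : ∀ d d' : F, ∀ᶠ y in l, (d < y ↔ d' < y)) (hne : ∀ d : F, ∀ᶠ y in l, y ≠ d) :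
    ∃ g : F → ℝ, Continuous g ∧ StrictMono g ∧ Tendsto g l (cocompact ℝ) := by
  obtain ⟨d₀⟩ := l.nonempty_of_neBot
  have : Nontrivial F := ⟨_, d₀, (hne d₀).exists.choose_spec⟩
  obtain ⟨φ, hφ, hmono, hIcc⟩ := exists_continuous_strictMono_mem_Icc (F := F)
  obtain ⟨u, hu, hu_mono, hu_top⟩ := exists_continuous_strictMono_forall_exists_le hφ hmono
    ⟨1, Set.forall_mem_range.2 fun y => (hIcc y).2⟩
  obtain ⟨v, hv, hv_mono, hv_bot⟩ := exists_continuous_strictMono_forall_exists_le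
    (F := Fᵒᵈ) (φ := fun y => -φ (OrderDual.ofDual y)) hφ.neg
    (fun y z hyz => neg_lt_neg (hmono hyz))
    ⟨0, Set.forall_mem_range.2 fun y => neg_nonpos.2 (hIcc _).1⟩
  have hv_anti : StrictAnti fun y : F => v (OrderDual.toDual y) := fun y z hyz => hv_mono hyz
  refine ⟨fun y => u y - v (OrderDual.toDual y), hu.sub hv, fun y z hyz =>
    sub_lt_sub (hu_mono hyz) (hv_anti hyz), ?_⟩
  rw [← Metric.cobounded_eq_cocompact, ← tendsto_norm_atTop_iff_cobounded, tendsto_atTop]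
  intro c
  obtain ⟨d, hd⟩ := hu_top (c + v (OrderDual.toDual d₀))
  obtain ⟨d', hd'⟩ := hv_bot (c + u d₀)
  filter_upwards [hend d₀ d, hend d₀ (OrderDual.ofDual d'), hne d₀, hne (OrderDual.ofDual d')]
    with y hy hy' hy₀ hyd'
  rcases hy₀.lt_or_gt with h | h
  · have hlt : y < OrderDual.ofDual d' :=
      lt_of_le_of_ne (le_of_not_gt fun h' => h.not_gt (hy'.2 h')) hyd'
    refine le_trans ?_ (neg_le_abs _)
    linarith [hd' (OrderDual.toDual y) hlt, hu_mono h]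
  · refine le_trans ?_ (le_abs_self _)
    linarith [hd y (hy.1 h), hv_anti h]

end OrderEmbedding

section SignOrder

variable {F : Type*} [TopologicalSpace F] [T1Space F] [PreconnectedSpace F] {q : F → F → ℝ}

/-- Transitivity: if `a < b < c` then `a` lies in the piece of `F ∖ {b}` not containing `c`, and
together with `b` this connected piece stays on one side of `c`. -/
theorem isStrictTotalOrder_of_mul_neg (hcont : ∀ y, Continuous (q y))
    (hanti : ∀ y z, y ≠ z → q y z * q z y < 0) :
    IsStrictTotalOrder F fun y z => y ≠ z ∧ 0 < q y z where
  irrefl _ h := h.1 rfl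
  trichotomous y z hyz hzy := by
    by_contra hne
    have hne0 := left_ne_zero_of_mul (hanti y z hne).ne
    rcases hne0.lt_or_gt with h | h
    · exact hzy ⟨Ne.symm hne, (pos_iff_neg_of_mul_neg (hanti z y (Ne.symm hne))).2 h⟩
    · exact hyz ⟨hne, h⟩
  trans a b c := by
    rintro ⟨hab, hqab⟩ ⟨hbc, hqbc⟩
    have hcut y := isCut_of_continuous_of_ne_zero (hcont y) fun z hz =>
      left_ne_zero_of_mul (hanti y z hz.symm).ne
    have hqcb := (pos_iff_neg_of_mul_neg (hanti b c hbc)).1 hqbc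
    have hqba := (pos_iff_neg_of_mul_neg (hanti a b hab)).1 hqab
    obtain ⟨hac, hqca⟩ := (hcut b).insert_right_subset_right (hcut c) ⟨hbc.symm, hqbc⟩
      ⟨b, Set.mem_insert _ _, hbc, hqcb⟩ (Or.inr ⟨hab, hqba⟩)
    exact ⟨hac, (pos_iff_neg_of_mul_neg (hanti a c hac)).2 hqca⟩

theorem exists_continuous_injective_tendsto_cocompact_of_mul_neg
    [TopologicalSpace.SeparableSpace F] (hcont : ∀ y, Continuous (q y))
    (hanti : ∀ y z, y ≠ z → q y z * q z y < 0) {l : Filter F} [l.NeBot]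
    (hend : ∀ d d', ∀ᶠ y in l, (0 < q d y ↔ 0 < q d' y)) (hne : ∀ d, ∀ᶠ y in l, y ≠ d) :
    ∃ g : F → ℝ, Continuous g ∧ Function.Injective g ∧ Tendsto g l (cocompact ℝ) := by
  classical
  have := isStrictTotalOrder_of_mul_neg hcont hanti
  let _ : LinearOrder F := linearOrderOfSTO fun y z => y ≠ z ∧ 0 < q y z
  have hcut y := isCut_of_continuous_of_ne_zero (hcont y) fun z hz =>
    left_ne_zero_of_mul (hanti y z hz.symm).ne
  have hIoi : ∀ a : F, Set.Ioi a = {z | z ≠ a ∧ 0 < q a z} := fun a =>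
    Set.ext fun z => and_congr_left' ne_comm
  have hIio : ∀ a : F, Set.Iio a = {z | z ≠ a ∧ q a z < 0} := fun a =>
    Set.ext fun z => and_congr_right fun hza => pos_iff_neg_of_mul_neg (hanti z a hza)
  have : ClosedIicTopology F := ⟨fun a => by
    rw [← isOpen_compl_iff, Set.compl_Iic, hIoi]
    exact (hcut a).isOpen_left⟩
  have : ClosedIciTopology F := ⟨fun a => by
    rw [← isOpen_compl_iff, Set.compl_Ici, hIio]
    exact (hcut a).isOpen_right⟩
  obtain ⟨g, hg, hmono, htendsto⟩ := exists_continuous_strictMono_tendsto_cocompact (l := l)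
    (fun d d' => by
      filter_upwards [hend d d', hne d, hne d'] with y hy hd hd'
      exact and_congr (iff_of_true hd.symm hd'.symm) hy) hne
  exact ⟨g, hg, hmono.injective, htendsto⟩

end SignOrder

section OnePointCompactification

variable {X V : Type*} [TopologicalSpace X] [CompactSpace X]

theorem cocompact_subtype_ne_le_comap (p : X) :
    cocompact {x : X // x ≠ p} ≤ comap Subtype.val (𝓝 p) := by
  rintro s ⟨t, ht, hts⟩
  obtain ⟨u, hut, hu, hpu⟩ := mem_nhds_iff.1 ht
  refine mem_cocompact.2 ⟨Subtype.val ⁻¹' uᶜ, ?_, ?_⟩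
  · exact Topology.IsInducing.subtypeVal.isCompact_preimage' hu.isClosed_compl.isCompact
      fun x hx => ⟨⟨x, fun hxp => hx (hxp ▸ hpu)⟩, rfl⟩
  · rw [← Set.preimage_compl, compl_compl]
    exact (Set.preimage_mono hut).trans hts

theorem exists_continuous_injective_sphere_of_tendsto_cocompact [T2Space X]
    [NormedAddCommGroup V] [NormedSpace ℝ V] [FiniteDimensional ℝ V] {k : ℕ}
    (hk : Module.finrank ℝ V ≤ k) {p : X} {g : {x : X // x ≠ p} → V} (hg : Continuous g)
    (hinj : Function.Injective g)
    (hlim : Tendsto g (comap Subtype.val (𝓝 p)) (cocompact V)) :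
    ∃ f : X → Metric.sphere (0 : EuclideanSpace ℝ (Fin (k + 1))) 1,
      Continuous f ∧ Function.Injective f := by
  obtain ⟨L, hL⟩ := finrank_le_iff_exists_linearMap (R := ℝ) (M := V)
    (M' := EuclideanSpace ℝ (Fin k)) |>.1 (by simpa using hk)
  have hLg : Tendsto (L ∘ g) (coclosedCompact _) (coclosedCompact (EuclideanSpace ℝ (Fin k))) := by
    rw [coclosedCompact_eq_cocompact, coclosedCompact_eq_cocompact]
    exact (L.isClosedEmbedding_of_injective (LinearMap.ker_eq_bot.2 hL)).tendsto_cocompact.comp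
      (hlim.mono_left (cocompact_subtype_ne_le_comap p))
  let e : OnePoint {x : X // x ≠ p} ≃ₜ X :=
    OnePoint.equivOfIsEmbeddingOfRangeEq p Subtype.val .subtypeVal Subtype.range_val
  let s : OnePoint (EuclideanSpace ℝ (Fin k)) ≃ₜ
      Metric.sphere (0 : EuclideanSpace ℝ (Fin (k + 1))) 1 :=
    onePointEquivSphereOfFinrankEq (by simp)
  exact ⟨s ∘ OnePoint.map (L ∘ g) ∘ e.symm,
    s.continuous.comp ((OnePoint.continuous_map
      (L.continuous_of_finiteDimensional.comp hg) hLg).comp e.symm.continuous),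
    s.injective.comp ((Option.map_injective (hL.comp hinj)).comp e.symm.injective)⟩

theorem tendsto_cocompact_of_forall_ultrafilter {α Y : Type*} [TopologicalSpace Y]
    {g : α → Y} {l : Filter α} (h : ∀ u : Ultrafilter α, ↑u ≤ l → ∀ y, ¬ Tendsto g u (𝓝 y)) :
    Tendsto g l (cocompact Y) := by
  refine (hasBasis_cocompact.tendsto_right_iff).2 fun K hK => ?_
  by_contra hcon
  have : (l ⊓ 𝓟 (g ⁻¹' K)).NeBot := frequently_mem_iff_neBot.1 fun hev => hcon hev
  let u := Ultrafilter.of (l ⊓ 𝓟 (g ⁻¹' K))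
  have hu : ↑u ≤ l ⊓ 𝓟 (g ⁻¹' K) := Ultrafilter.of_le _
  obtain ⟨y, -, hy⟩ := hK.ultrafilter_le_nhds (u.map g)
    (tendsto_principal.2 (le_principal_iff.1 (hu.trans inf_le_right)))
  exact h u (hu.trans inf_le_left) y hy

end OnePointCompactification

section ExteriorAlgebra

open ExteriorAlgebra (ι ιMulti)

section

variable {R V : Type*} [CommRing R] [AddCommGroup V] [Module R V]

theorem ιMulti_cons {n : ℕ} (e : V) (v : Fin n → V) :
    ιMulti R (n + 1) (Fin.cons e v) = ι R e * ιMulti R n v := by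
  rw [ExteriorAlgebra.ιMulti_succ_apply, Fin.cons_zero]
  rfl

theorem ι_mul_ιMulti_comm (e : V) {b : ℕ} (t : Fin b → V) :
    ι R e * ιMulti R b t = (-1 : R) ^ b • (ιMulti R b t * ι R e) := by
  induction b with
  | zero => simp
  | succ b ih =>
    calc ι R e * ιMulti R (b + 1) t = ι R e * ι R (t 0) * ιMulti R b (Fin.tail t) := by
          rw [← Fin.cons_self_tail t, ιMulti_cons, mul_assoc, Fin.cons_zero, Fin.tail_cons]
      _ = -(ι R (t 0) * (ι R e * ιMulti R b (Fin.tail t))) := by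
          rw [eq_neg_of_add_eq_zero_left (ExteriorAlgebra.ι_add_mul_swap e (t 0)), neg_mul,
            mul_assoc]
      _ = (-1 : R) ^ (b + 1) • (ι R (t 0) * ιMulti R b (Fin.tail t) * ι R e) := by
          rw [ih, mul_smul_comm, pow_succ, mul_neg_one, neg_smul, mul_assoc]
      _ = _ := by rw [← ιMulti_cons, Fin.cons_self_tail]

theorem ιMulti_mul_ιMulti_comm {a b : ℕ} (u : Fin a → V) (t : Fin b → V) :
    ιMulti R a u * ιMulti R b t = (-1 : R) ^ (a * b) • (ιMulti R b t * ιMulti R a u) := by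
  induction a with
  | zero => simp
  | succ a ih =>
    calc ιMulti R (a + 1) u * ιMulti R b t
        = ι R (u 0) * (ιMulti R a (Fin.tail u) * ιMulti R b t) := by
          rw [← mul_assoc, ← ιMulti_cons, Fin.cons_self_tail]
      _ = (-1 : R) ^ (a * b) • ((ι R (u 0) * ιMulti R b t) * ιMulti R a (Fin.tail u)) := by
          rw [ih, mul_smul_comm, mul_assoc]
      _ = (-1 : R) ^ ((a + 1) * b) • (ιMulti R b t * (ι R (u 0) * ιMulti R a (Fin.tail u))) := by
          rw [ι_mul_ιMulti_comm, smul_mul_assoc, smul_smul, mul_assoc, ← pow_add, add_one_mul]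
      _ = _ := by rw [← ιMulti_cons, Fin.cons_self_tail]

end

variable {K V : Type*} [Field K] [AddCommGroup V] [Module K V]

theorem ιMulti_ne_zero_iff {n : ℕ} {v : Fin n → V} :
    ιMulti K n v ≠ 0 ↔ LinearIndependent K v := by
  refine ⟨fun h => by_contra fun hv => h ((ιMulti K n).map_linearDependent v hv), fun hv h0 => ?_⟩
  have hmem := (exteriorPower.ιMulti_family_linearIndependent_field (n := n) hv).ne_zero
    (Set.powersetCard.ofFinEmbEquiv (RelEmbedding.refl (· ≤ ·)))
  refine hmem (Subtype.ext ?_)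
  rwa [exteriorPower.ιMulti_family_apply_coe, ExteriorAlgebra.ιMulti_family, Equiv.symm_apply_apply]

theorem mem_span_range_iff_ι_mul_ιMulti_eq_zero {n : ℕ} {v : Fin n → V} (hv : LinearIndependent K v)
    {e : V} : e ∈ Submodule.span K (Set.range v) ↔ ι K e * ιMulti K n v = 0 := by
  rw [← not_iff_not, ← ne_eq, ← ιMulti_cons, ιMulti_ne_zero_iff, linearIndependent_finCons,
    and_iff_right hv]

theorem span_range_eq_of_ιMulti_eq_smul {n : ℕ} {v w : Fin n → V} (hv : LinearIndependent K v)
    (hw : LinearIndependent K w) {c : K} (hc : c ≠ 0) (h : ιMulti K n w = c • ιMulti K n v) :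
    Submodule.span K (Set.range w) = Submodule.span K (Set.range v) := by
  ext e
  rw [mem_span_range_iff_ι_mul_ιMulti_eq_zero hv, mem_span_range_iff_ι_mul_ιMulti_eq_zero hw, h,
    mul_smul_comm, smul_eq_zero_iff_right hc]

theorem linearIndependent_append_iff {a b : ℕ} {u : Fin a → V} {t : Fin b → V} :
    LinearIndependent K (Fin.append u t) ↔ LinearIndependent K u ∧ LinearIndependent K t ∧
      Disjoint (Submodule.span K (Set.range u)) (Submodule.span K (Set.range t)) := by
  rw [← linearIndependent_equiv finSumFinEquiv, linearIndependent_sum]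
  have hl : (Fin.append u t ∘ finSumFinEquiv) ∘ Sum.inl = u := by ext; simp
  have hr : (Fin.append u t ∘ finSumFinEquiv) ∘ Sum.inr = t := by ext; simp
  rw [hl, hr]

/-- The pairing `⟨ω, η⟩ = det (ω ∧ η)` on the exterior algebra of `K^d`, which is perfect between
complementary degrees. -/
noncomputable def wedgePairing (K : Type*) [Field K] (d : ℕ) :
    ExteriorAlgebra K (Fin d → K) →ₗ[K] ExteriorAlgebra K (Fin d → K) →ₗ[K] K :=
  (LinearMap.mul K _).compr₂ (topDegreeDet K d)

section

variable {a b d : ℕ} {u : Fin a → Fin d → K} {t : Fin b → Fin d → K}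

theorem wedgePairing_apply (ω η : ExteriorAlgebra K (Fin d → K)) :
    wedgePairing K d ω η = topDegreeDet K d (ω * η) := rfl

theorem wedgePairing_mul (ω θ η : ExteriorAlgebra K (Fin d → K)) :
    wedgePairing K d (ω * θ) η = wedgePairing K d ω (θ * η) := by
  rw [wedgePairing_apply, wedgePairing_apply, mul_assoc]

theorem wedgePairing_ιMulti_comm (u : Fin a → Fin d → K) (t : Fin b → Fin d → K) :
    wedgePairing K d (ιMulti K a u) (ιMulti K b t) =
      (-1) ^ (a * b) * wedgePairing K d (ιMulti K b t) (ιMulti K a u) := by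
  rw [wedgePairing_apply, ιMulti_mul_ιMulti_comm, map_smul, smul_eq_mul, wedgePairing_apply]

theorem topDegreeDet_ιMulti_ne_zero_iff {t : Fin d → Fin d → K} :
    topDegreeDet K d (ιMulti K d t) ≠ 0 ↔ LinearIndependent K t := by
  rw [topDegreeDet, ExteriorAlgebra.liftAlternating_apply_ιMulti, dif_pos rfl, ← isUnit_iff_ne_zero]
  exact (Matrix.isUnit_iff_isUnit_det _).symm.trans Matrix.linearIndependent_rows_iff_isUnit.symm

theorem wedgePairing_ne_zero_iff (hd : a + b = d) :
    wedgePairing K d (ιMulti K a u) (ιMulti K b t) ≠ 0 ↔ ιMulti K a u * ιMulti K b t ≠ 0 := by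
  subst hd
  rw [wedgePairing_apply, ExteriorAlgebra.ιMulti_mul_ιMulti, topDegreeDet_ιMulti_ne_zero_iff,
    ιMulti_ne_zero_iff]

theorem wedgePairing_ne_zero_iff_isCompl (hd : a + b = d) :
    wedgePairing K d (ιMulti K a u) (ιMulti K b t) ≠ 0 ↔
      LinearIndependent K u ∧ LinearIndependent K t ∧
        IsCompl (Submodule.span K (Set.range u)) (Submodule.span K (Set.range t)) := by
  rw [wedgePairing_ne_zero_iff hd, ExteriorAlgebra.ιMulti_mul_ιMulti, ιMulti_ne_zero_iff,
    linearIndependent_append_iff]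
  refine and_congr_right fun hu => and_congr_right fun ht =>
    (Submodule.isCompl_iff_disjoint _ _ ?_).symm
  rw [finrank_span_eq_card hu, finrank_span_eq_card ht]
  simp [hd]

theorem wedgePairing_eq_zero_of_mem {j : Fin b} (hj : t j ∈ Submodule.span K (Set.range u)) :
    wedgePairing K d (ιMulti K a u) (ιMulti K b t) = 0 := by
  rw [wedgePairing_apply, ExteriorAlgebra.ιMulti_mul_ιMulti, AlternatingMap.map_linearDependent,
    map_zero]
  rw [linearIndependent_append_iff]
  rintro ⟨-, ht, hdisj⟩
  exact ht.ne_zero j (Submodule.disjoint_def.1 hdisj _ hj (Submodule.subset_span ⟨j, rfl⟩))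

/-- If `ω = u₁ ∧ ⋯ ∧ u_a` pairs nontrivially with `t₁ ∧ ⋯ ∧ t_b`, where `a + b = d`, then this is
the projection onto the span of `u` along the span of `t`; the coefficients are given by Cramer's
rule, so that they depend on `ω` only through ratios of values of the pairing. -/
noncomputable def cramerProj (ω : ExteriorAlgebra K (Fin d → K)) (t : Fin b → Fin d → K) :
    (Fin d → K) →ₗ[K] Fin d → K :=
  LinearMap.id - ∑ j, LinearMap.smulRight ((wedgePairing K d ω (ιMulti K b t))⁻¹ •
    ((wedgePairing K d ω).compAlternatingMap (ιMulti K b)).toMultilinearMap.toLinearMap t j) (t j)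

theorem cramerProj_apply (ω : ExteriorAlgebra K (Fin d → K)) (t : Fin b → Fin d → K)
    (z : Fin d → K) : cramerProj ω t z = z - ∑ j, (wedgePairing K d ω (ιMulti K b
      (Function.update t j z)) / wedgePairing K d ω (ιMulti K b t)) • t j := by
  simp [cramerProj, div_eq_inv_mul]

theorem sub_cramerProj_mem (ω : ExteriorAlgebra K (Fin d → K)) (t : Fin b → Fin d → K)
    (z : Fin d → K) : z - cramerProj ω t z ∈ Submodule.span K (Set.range t) := by
  rw [cramerProj_apply, sub_sub_cancel]
  exact Submodule.sum_mem _ fun j _ => Submodule.smul_mem _ _ (Submodule.subset_span ⟨j, rfl⟩)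

theorem cramerProj_eq_self {z : Fin d → K} (hz : z ∈ Submodule.span K (Set.range u)) :
    cramerProj (ιMulti K a u) t z = z := by
  rw [cramerProj_apply, sub_eq_self]
  refine Finset.sum_eq_zero fun j _ => ?_
  rw [wedgePairing_eq_zero_of_mem (j := j) (by rwa [Function.update_self]), zero_div, zero_smul]

theorem cramerProj_mem (hd : a + b = d)
    (h : wedgePairing K d (ιMulti K a u) (ιMulti K b t) ≠ 0) (z : Fin d → K) :
    cramerProj (ιMulti K a u) t z ∈ Submodule.span K (Set.range u) := by
  have htop := ((wedgePairing_ne_zero_iff_isCompl hd).1 h).2.2.sup_eq_top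
  obtain ⟨p, hp, q, hq, rfl⟩ := Submodule.mem_sup.1 (htop ▸ Submodule.mem_top : z ∈ _)
  have hker : Submodule.span K (Set.range t) ≤ LinearMap.ker (cramerProj (ιMulti K a u) t) := by
    rw [Submodule.span_le]
    rintro _ ⟨i, rfl⟩
    rw [SetLike.mem_coe, LinearMap.mem_ker, cramerProj_apply, Finset.sum_eq_single i]
    · rw [Function.update_eq_self, div_self h, one_smul, sub_self]
    · intro j _ hj
      rw [(ιMulti K b).map_update_self _ hj, map_zero, zero_div, zero_smul]
    · simp
  rw [map_add, cramerProj_eq_self hp, hker hq, add_zero]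
  exact hp

end

end ExteriorAlgebra

section PluckerTopology

open ExteriorAlgebra (ιMulti)

theorem span_range_stdBasisWedge (K : Type*) [Field K] (d : ℕ) :
    Submodule.span K (Set.range (stdBasisWedge K (d := d))) = ⊤ := by
  rw [← top_le_iff, ← ExteriorAlgebra.ιMulti_span K (Fin d → K), Submodule.span_le]
  rintro _ ⟨⟨b, t⟩, rfl⟩
  have hmem : ιMulti K b t ∈ ⋀[K]^b (Fin d → K) :=
    ExteriorAlgebra.ιMulti_range K b (Set.mem_range_self t)
  rw [← exteriorPower.ιMulti_family_span_fixedDegree_of_span K (Pi.basisFun K (Fin d)).span_eq]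
    at hmem
  refine Submodule.span_mono ?_ hmem
  rintro _ ⟨s, rfl⟩
  refine ⟨s.1, ?_⟩
  rw [ExteriorAlgebra.ιMulti_family, ExteriorAlgebra.ιMulti_apply, stdBasisWedge,
    Set.powersetCard.ofFinEmbEquiv_symm_apply, ← Finset.listMap_orderEmbOfFin_finRange s.1 s.2,
    List.map_map, List.ofFn_eq_map]
  exact congrArg List.prod (List.map_congr_left fun i _ => by simp)

theorem continuous_wedgePairing {K : Type*} [Field K] [TopologicalSpace K] [IsTopologicalRing K]
    {a d : ℕ} (θ : ExteriorAlgebra K (Fin d → K)) :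
    Continuous fun ω : ⋀[K]^a (Fin d → K) => wedgePairing K d ω θ := by
  have hθ : θ ∈ Submodule.span K (Set.range (stdBasisWedge K (d := d))) :=
    span_range_stdBasisWedge K d ▸ Submodule.mem_top
  induction hθ using Submodule.span_induction with
  | mem _ h =>
    obtain ⟨s, rfl⟩ := h
    have hcoord : Continuous fun ω : ⋀[K]^a (Fin d → K) =>
      extCoordinates K d (ω : ExteriorAlgebra K (Fin d → K)) := continuous_induced_dom
    exact (continuous_apply s).comp hcoord
  | zero => simpa only [map_zero] using continuous_const
  | add _ _ _ _ hx hy =>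
    simp only [map_add]
    exact hx.add hy
  | smul c _ _ hx =>
    simp only [map_smul]
    exact hx.const_smul c

theorem div_rep_mk {K V : Type*} [Field K] [AddCommGroup V] [Module K V] (L L' : V →ₗ[K] K)
    {v : V} (hv : v ≠ 0) : L (Projectivization.mk K v hv).rep /
      L' (Projectivization.mk K v hv).rep = L v / L' v := by
  obtain ⟨c, hc⟩ := Projectivization.exists_smul_eq_mk_rep K v hv
  rw [← hc, Units.smul_def, map_smul, map_smul, smul_eq_mul, smul_eq_mul,
    mul_div_mul_left _ _ c.ne_zero]

theorem continuousAt_div_rep {K V : Type*} [Field K] [TopologicalSpace K]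
    [IsTopologicalDivisionRing K] [T1Space K] [AddCommGroup V] [Module K V] [TopologicalSpace V]
    {L L' : V →ₗ[K] K} (hL : Continuous L) (hL' : Continuous L') {P : Projectivization K V}
    (hP : L' P.rep ≠ 0) : ContinuousAt (fun Q : Projectivization K V => L Q.rep / L' Q.rep) P := by
  let q : {v : V // v ≠ 0} → Projectivization K V := fun v => Projectivization.mk K v.1 v.2
  have hq : IsQuotientMap q := isQuotientMap_quot_mk
  have hpre : q ⁻¹' {Q | L' Q.rep ≠ 0} =
      {v : {v : V // v ≠ 0} | L' v ≠ 0} := by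
    ext v
    obtain ⟨c, hc⟩ := Projectivization.exists_smul_eq_mk_rep K v.1 v.2
    simp [q, ← hc, Units.smul_def]
  have hopen : IsOpen {Q : Projectivization K V | L' Q.rep ≠ 0} := by
    rw [← hq.isOpen_preimage, hpre]
    exact isOpen_ne.preimage (hL'.comp continuous_subtype_val)
  refine ContinuousOn.continuousAt ?_ (hopen.mem_nhds hP)
  rw [hq.continuousOn_isOpen_iff hopen, hpre]
  refine ContinuousOn.congr (f := fun v : {v : V // v ≠ 0} => L v / L' v) ?_
    fun v _ => div_rep_mk L L' v.2
  exact (hL.comp continuous_subtype_val).continuousOn.div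
    (hL'.comp continuous_subtype_val).continuousOn fun v hv => hv

/-- Convergence of `f n` to `ω` in the projectivized exterior algebra, expressed through ratios of
Plücker coordinates. -/
def PluckerTendsto {α : Type*} {d : ℕ} (f : α → ExteriorAlgebra ℝ (Fin d → ℝ)) (l : Filter α)
    (ω : ExteriorAlgebra ℝ (Fin d → ℝ)) : Prop :=
  ∀ θ θ₀, wedgePairing ℝ d ω θ₀ ≠ 0 →
    Tendsto (fun n => wedgePairing ℝ d (f n) θ / wedgePairing ℝ d (f n) θ₀) l
      (𝓝 (wedgePairing ℝ d ω θ / wedgePairing ℝ d ω θ₀))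

theorem pluckerTendsto_of_tendsto_mk {α : Type*} {l : Filter α} {a d : ℕ}
    {f : α → Fin a → Fin d → ℝ} {v : Fin a → Fin d → ℝ} (hf : ∀ n, wedgeMk ℝ a (f n) ≠ 0)
    (hv : wedgeMk ℝ a v ≠ 0)
    (h : Tendsto (fun n => Projectivization.mk ℝ (wedgeMk ℝ a (f n)) (hf n)) l
      (𝓝 (Projectivization.mk ℝ (wedgeMk ℝ a v) hv))) :
    PluckerTendsto (fun n => ιMulti ℝ a (f n)) l (ιMulti ℝ a v) := by
  intro θ θ₀ h₀
  let L (η : ExteriorAlgebra ℝ (Fin d → ℝ)) : ⋀[ℝ]^a (Fin d → ℝ) →ₗ[ℝ] ℝ :=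
    (wedgePairing ℝ d).flip η ∘ₗ Submodule.subtype _
  have hlim := (continuousAt_div_rep (L := L θ) (L' := L θ₀) (continuous_wedgePairing θ)
    (continuous_wedgePairing θ₀) (P := Projectivization.mk ℝ (wedgeMk ℝ a v) hv) ?_).tendsto.comp h
  · simp only [Function.comp_def, div_rep_mk] at hlim
    exact hlim
  · obtain ⟨c, hc⟩ := Projectivization.exists_smul_eq_mk_rep ℝ _ hv
    rw [← hc, Units.smul_def, map_smul]
    exact smul_ne_zero c.ne_zero h₀

namespace PluckerTendsto

variable {α : Type*} {l : Filter α} {a d : ℕ} {f : α → ExteriorAlgebra ℝ (Fin d → ℝ)}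
  {ω : ExteriorAlgebra ℝ (Fin d → ℝ)}

theorem eventually_ne_zero (h : PluckerTendsto f l ω) {θ : ExteriorAlgebra ℝ (Fin d → ℝ)}
    (hθ : wedgePairing ℝ d ω θ ≠ 0) : ∀ᶠ n in l, wedgePairing ℝ d (f n) θ ≠ 0 := by
  have := h θ θ hθ
  rw [div_self hθ] at this
  filter_upwards [this.eventually_ne one_ne_zero] with n hn h0
  exact hn (by rw [h0, zero_div])

theorem tendsto_cramerProj (h : PluckerTendsto f l ω) {b : ℕ} {t : Fin b → Fin d → ℝ}
    (ht : wedgePairing ℝ d ω (ιMulti ℝ b t) ≠ 0) (z : Fin d → ℝ) :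
    Tendsto (fun n => cramerProj (f n) t z) l (𝓝 (cramerProj ω t z)) := by
  simp only [cramerProj_apply]
  exact tendsto_const_nhds.sub (tendsto_finsetSum _ fun j _ => (h _ _ ht).smul_const (t j))

end PluckerTendsto

end PluckerTopology

section SubspaceLimits

theorem exists_linearIndependent_span_range_eq {K V : Type*} [Field K] [AddCommGroup V] [Module K V]
    {S : Submodule K V} [FiniteDimensional K S] {b : ℕ} (hS : Module.finrank K S = b) :
    ∃ t : Fin b → V, LinearIndependent K t ∧ Submodule.span K (Set.range t) = S := by
  let B := Module.finBasisOfFinrankEq K S hS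
  refine ⟨fun i => B i, B.linearIndependent.map' S.subtype S.ker_subtype, ?_⟩
  rw [show (fun i => (B i : V)) = S.subtype ∘ B from rfl, Set.range_comp, Submodule.span_image,
    B.span_eq, Submodule.map_top, Submodule.range_subtype]

theorem exists_isCompl_disjoint {K V : Type*} [Field K] [AddCommGroup V] [Module K V]
    [FiniteDimensional K V] {P W : Submodule K V}
    (h : Module.finrank K P ≤ Module.finrank K W) : ∃ U, IsCompl U W ∧ Disjoint U P := by
  obtain ⟨U, hU⟩ := exists_maximal_of_wellFoundedGT (fun U => Disjoint U W ∧ Disjoint U P)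
    ⟨⊥, disjoint_bot_left, disjoint_bot_left⟩
  refine ⟨U, ⟨hU.prop.1, codisjoint_iff.2 (by_contra fun hW => ?_)⟩, hU.prop.2⟩
  have hP : U ⊔ P ≠ ⊤ := by
    intro hP
    have hdim := Submodule.finrank_add_eq_of_isCompl ⟨hU.prop.2, codisjoint_iff.2 hP⟩
    refine hW (Submodule.eq_top_of_disjoint U W ?_ hU.prop.1)
    omega
  -- A vector space is not the union of two proper subspaces.
  obtain ⟨x, hx⟩ : ∃ x, x ∉ (U ⊔ W : Submodule K V) ∧ x ∉ (U ⊔ P : Submodule K V) := by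
    by_contra! hx
    have hcover : ((⊤ : Submodule K V) : Set V) ⊆ ↑(U ⊔ W) ∪ ↑(U ⊔ P) := fun x _ =>
      or_iff_not_imp_left.2 (hx x)
    rcases AddSubgroupClass.subset_union.1 hcover with htop | htop
    exacts [hW (top_le_iff.1 htop), hP (top_le_iff.1 htop)]
  have hdisj {Q : Submodule K V} (hQ : Disjoint U Q) (hxQ : x ∉ U ⊔ Q) :
      Disjoint (U ⊔ Submodule.span K {x}) Q := by
    rw [sup_comm]
    exact hQ.disjoint_sup_left_of_disjoint_sup_right
      (Submodule.disjoint_span_singleton_of_notMem hxQ).symm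
  have hle := hU.le_of_ge ⟨hdisj hU.prop.1 hx.1, hdisj hU.prop.2 hx.2⟩ le_sup_left
  exact hx.1 (Submodule.mem_sup_left
    (hle (Submodule.mem_sup_right (Submodule.mem_span_singleton_self x))))

variable {α V : Type*} [NormedAddCommGroup V] [NormedSpace ℝ V] {l : Filter α}

theorem tendsto_linearMap_apply [FiniteDimensional ℝ V] {W : Type*} [AddCommGroup W] [Module ℝ W]
    [TopologicalSpace W] [ContinuousAdd W] [ContinuousSMul ℝ W] {L : α → V →ₗ[ℝ] W}
    {L₀ : V →ₗ[ℝ] W} (hL : ∀ z, Tendsto (fun n => L n z) l (𝓝 (L₀ z))) {s : α → V} {z : V}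
    (hs : Tendsto s l (𝓝 z)) : Tendsto (fun n => L n (s n)) l (𝓝 (L₀ z)) := by
  let B := Module.finBasis ℝ V
  have hexpand (T : V →ₗ[ℝ] W) (y : V) : T y = ∑ i, B.coord i y • T (B i) := by
    conv_lhs => rw [← B.sum_repr y, map_sum]
    simp only [map_smul, Module.Basis.coord_apply]
  simp only [hexpand _ (s _), hexpand _ z]
  exact tendsto_finsetSum _ fun i _ =>
    (((B.coord i).continuous_of_finiteDimensional.tendsto z).comp hs).smul (hL (B i))

/-- Convergence of subspaces, in the topology of the Grassmannian: some projections onto `S n`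
converge pointwise to a projection onto `S₀`. -/
def SubspaceTendsto (S : α → Submodule ℝ V) (l : Filter α) (S₀ : Submodule ℝ V) : Prop :=
  ∃ (L : α → V →ₗ[ℝ] V) (L₀ : V →ₗ[ℝ] V), (∀ᶠ n in l, LinearMap.IsProj (S n) (L n)) ∧
    LinearMap.IsProj S₀ L₀ ∧ ∀ z, Tendsto (fun n => L n z) l (𝓝 (L₀ z))

namespace SubspaceTendsto

variable {S : α → Submodule ℝ V} {S₀ : Submodule ℝ V}

theorem exists_tendsto (h : SubspaceTendsto S l S₀) {p : V} (hp : p ∈ S₀) :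
    ∃ s : α → V, (∀ᶠ n in l, s n ∈ S n) ∧ Tendsto s l (𝓝 p) := by
  obtain ⟨L, L₀, hproj, hproj₀, hL⟩ := h
  refine ⟨fun n => L n p, hproj.mono fun n hn => hn.map_mem p, ?_⟩
  simpa only [hproj₀.map_id p hp] using hL p

theorem mem_of_tendsto [FiniteDimensional ℝ V] (h : SubspaceTendsto S l S₀) [l.NeBot] {s : α → V}
    (hs : ∀ᶠ n in l, s n ∈ S n) {p : V} (hp : Tendsto s l (𝓝 p)) : p ∈ S₀ := by
  obtain ⟨L, L₀, hproj, hproj₀, hL⟩ := h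
  have heq : (fun n => L n (s n)) =ᶠ[l] s := by
    filter_upwards [hproj, hs] with n hn hsn using hn.map_id _ hsn
  rw [tendsto_nhds_unique hp ((tendsto_linearMap_apply hL hp).congr' heq)]
  exact hproj₀.map_mem p

theorem mono (h : SubspaceTendsto S l S₀) {l' : Filter α} (hl : l' ≤ l) :
    SubspaceTendsto S l' S₀ := by
  obtain ⟨L, L₀, hproj, hproj₀, hL⟩ := h
  exact ⟨L, L₀, hproj.filter_mono hl, hproj₀, fun z => (hL z).mono_left hl⟩

theorem comp (h : SubspaceTendsto S l S₀) {β : Type*} {g : β → α} {l' : Filter β}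
    (hg : Tendsto g l' l) : SubspaceTendsto (fun n => S (g n)) l' S₀ := by
  obtain ⟨L, L₀, hproj, hproj₀, hL⟩ := h
  exact ⟨fun n => L (g n), L₀, hg.eventually hproj, hproj₀, fun z => (hL z).comp hg⟩

end SubspaceTendsto

theorem PluckerTendsto.subspaceTendsto {α : Type*} {l : Filter α} {a d : ℕ}
    {f : α → Fin a → Fin d → ℝ} {v : Fin a → Fin d → ℝ} (hv : LinearIndependent ℝ v)
    (h : PluckerTendsto (fun n => ExteriorAlgebra.ιMulti ℝ a (f n)) l
      (ExteriorAlgebra.ιMulti ℝ a v)) :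
    SubspaceTendsto (fun n => Submodule.span ℝ (Set.range (f n))) l
      (Submodule.span ℝ (Set.range v)) := by
  obtain ⟨C, hC⟩ := Submodule.exists_isCompl (Submodule.span ℝ (Set.range v))
  have hdim := Submodule.finrank_add_eq_of_isCompl hC
  rw [finrank_span_eq_card hv, Fintype.card_fin, Module.finrank_fin_fun] at hdim
  obtain ⟨t, ht, htC⟩ := exists_linearIndependent_span_range_eq (S := C) rfl
  rw [← htC] at hC
  have hvt := (wedgePairing_ne_zero_iff_isCompl hdim).2 ⟨hv, ht, hC⟩
  exact ⟨_, _, (h.eventually_ne_zero hvt).mono fun n hn =>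
    ⟨cramerProj_mem hdim hn, fun z => cramerProj_eq_self⟩,
    ⟨cramerProj_mem hdim hvt, fun z => cramerProj_eq_self⟩, h.tendsto_cramerProj hvt⟩

end SubspaceLimits

section ConvergenceDynamics

theorem exists_strictMono_injective_comp {β : Type*} {g : ℕ → β}
    (hg : ∀ γ, ∀ᶠ n in atTop, g n ≠ γ) :
    ∃ φ : ℕ → ℕ, StrictMono φ ∧ Function.Injective (g ∘ φ) := by
  obtain ⟨φ, -, hφ⟩ := exists_seq_of_forall_finset_exists (fun _ : ℕ => True)
    (fun m n => m < n ∧ g n ≠ g m) fun s _ => by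
      have hs : ∀ᶠ n in atTop, ∀ m ∈ s, m < n ∧ g n ≠ g m :=
        (eventually_all_finset s).2 fun m _ => (eventually_gt_atTop m).and (hg (g m))
      exact hs.exists.imp fun n hn => ⟨trivial, hn⟩
  refine ⟨φ, fun m n h => (hφ m n h).1, fun m n hmn => ?_⟩
  by_contra hne
  exact (Ne.lt_or_gt hne).elim (fun h => (hφ m n h).2 hmn.symm) fun h => (hφ n m h).2 hmn

variable {Γ M : Type} [Group Γ] [TopologicalSpace M] [MulAction Γ M]

theorem eventually_ne_of_tendsto_smul [T1Space M] [Infinite M] {g : ℕ → Γ} {x b : M}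
    (h : ∀ y, y ≠ x → Tendsto (fun n => g n • y) atTop (𝓝 b)) (γ : Γ) :
    ∀ᶠ n in atTop, g n ≠ γ := by
  by_contra hγ
  have hb (y : M) (hy : y ≠ x) : γ • y = b := by
    by_contra hne
    refine hγ ?_
    filter_upwards [(h y hy).eventually_ne (Ne.symm hne)] with n hn hgn
    exact hn (by rw [hgn])
  obtain ⟨y, hy⟩ := exists_ne x
  obtain ⟨z, hzx, hzy⟩ := ENat.exists_ne_ne_of_three_le (by simp) x y
  exact hzy (MulAction.injective γ ((hb z hzx).trans (hb y hy).symm))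

theorem ConvLocUnif.tendsto_smul {g : ℕ → Γ} {a b z : M} (h : ConvLocUnif g a b) (hz : z ≠ b) :
    Tendsto (fun n => g n • z) atTop (𝓝 a) := fun U hU =>
  (h {z} isCompact_singleton (Set.mem_singleton_iff.not.2 hz.symm) U hU).mono fun _ hn => hn z rfl

theorem ConvLocUnif.tendsto_inv_smul [CompactSpace M] [T1Space M] {g : ℕ → Γ} {a b z : M}
    (h : ConvLocUnif g a b) (hz : z ≠ a) : Tendsto (fun n => (g n)⁻¹ • z) atTop (𝓝 b) := by
  refine tendsto_nhds.2 fun U hU hb => ?_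
  filter_upwards [h Uᶜ hU.isClosed_compl.isCompact (Set.notMem_compl_iff.2 hb) {y | y ≠ z}
    (isOpen_ne.mem_nhds hz.symm)] with n hn
  by_contra hU'
  exact hn _ hU' (smul_inv_smul _ _)

theorem IsConicalLimitPoint.exists_tendsto_inv_smul [CompactSpace M] [T2Space M] [Infinite M]
    (hconv : IsConvergenceAction Γ M) {x : M} (hx : IsConicalLimitPoint Γ x) :
    ∃ a b : M, a ≠ b ∧ ∃ g : ℕ → Γ, Tendsto (fun n => g n • x) atTop (𝓝 a) ∧
      (∀ y, y ≠ x → Tendsto (fun n => g n • y) atTop (𝓝 b)) ∧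
      ∀ z, z ≠ b → Tendsto (fun n => (g n)⁻¹ • z) atTop (𝓝 x) := by
  obtain ⟨a, b, hab, g, hgx, hgy⟩ := hx
  obtain ⟨φ, hφ, hinj⟩ := exists_strictMono_injective_comp (eventually_ne_of_tendsto_smul hgy)
  obtain ⟨ψ, hψ, a', b', h⟩ := hconv.2 _ hinj
  have hsub : Tendsto (φ ∘ ψ) atTop atTop := (hφ.comp hψ).tendsto_atTop
  obtain rfl : a' = b := by
    obtain ⟨y, hyx, hyb⟩ := ENat.exists_ne_ne_of_three_le (by simp) x b'
    exact tendsto_nhds_unique (h.tendsto_smul hyb) ((hgy y hyx).comp hsub)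
  obtain rfl : b' = x := by
    by_contra hne
    exact hab (tendsto_nhds_unique (hgx.comp hsub) (h.tendsto_smul (Ne.symm hne)))
  exact ⟨a, a', hab, g ∘ φ ∘ ψ, hgx.comp hsub, fun y hy => (hgy y hy).comp hsub,
    fun z hz => h.tendsto_inv_smul hz⟩

end ConvergenceDynamics

section Nesting

variable {V : Type*} [NormedAddCommGroup V] [NormedSpace ℝ V]

theorem isCompl_map_transvection {K V : Type*} [Field K] [AddCommGroup V] [Module K V]
    {B C : Submodule K V} (h : IsCompl B C) {f : Module.Dual K V} (hf : C ≤ LinearMap.ker f) {c : V}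
    (hc : c ∈ C) : IsCompl (B.map (LinearMap.transvection f c)) C := by
  have hfc : f c = 0 := hf hc
  have hfix : Set.EqOn (LinearEquiv.transvection hfc) id C := fun z hz => by
    have hfz : f z = 0 := hf hz
    rw [LinearEquiv.transvection.apply, hfz, zero_smul, add_zero, id]
  have hC : C.map (LinearEquiv.transvection hfc).toLinearMap = C :=
    SetLike.coe_injective (hfix.image_eq.trans (Set.image_id _))
  have hmap := (Submodule.orderIsoMapComap (LinearEquiv.transvection hfc)).isCompl h
  simp only [Submodule.orderIsoMapComap_apply] at hmap
  exact hC ▸ hmap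

theorem exists_tendsto_inv_norm_smul [FiniteDimensional ℝ V] {α : Type*} (u : Ultrafilter α)
    {s : α → V} (hs : ∀ᶠ n in u, s n ≠ 0) :
    ∃ z, z ≠ 0 ∧ Tendsto (fun n => ‖s n‖⁻¹ • s n) u (𝓝 z) := by
  have hsphere : ∀ᶠ n in (u : Filter α), ‖s n‖⁻¹ • s n ∈ Metric.sphere (0 : V) 1 := by
    filter_upwards [hs] with n hn
    rw [mem_sphere_zero_iff_norm, norm_smul, norm_inv, norm_norm,
      inv_mul_cancel₀ (norm_ne_zero_iff.2 hn)]
  obtain ⟨z, hz, hlim⟩ := (isCompact_sphere (0 : V) 1).ultrafilter_le_nhds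
    (u.map fun n => ‖s n‖⁻¹ • s n) (le_principal_iff.2 hsphere)
  exact ⟨z, ne_zero_of_mem_unit_sphere ⟨z, hz⟩, hlim⟩

theorem tendsto_norm_div_norm_zero_of_subspaceTendsto [FiniteDimensional ℝ V] {α : Type*}
    {u : Ultrafilter α} {T : α → V ≃ₗ[ℝ] V} {B C P W : Submodule ℝ V} (hBC : IsCompl B C)
    (hdisj : Disjoint P W)
    (hP : ∀ U, IsCompl U C → SubspaceTendsto (fun n => U.map (T n).toLinearMap) u P)
    (hW : SubspaceTendsto (fun n => C.map (T n).toLinearMap) u W) {s : α → V} (hs : ∀ n, s n ∈ B)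
    {p : V} (hsp : Tendsto s u (𝓝 p)) (hp : p ∉ C) {c : V} (hc : c ∈ C) :
    Tendsto (fun n => ‖T n c‖ / ‖T n (s n)‖) u (𝓝 0) := by
  by_contra hlim
  obtain ⟨ε, hε, hlarge⟩ : ∃ ε > 0, ∀ᶠ n in u, ε ≤ ‖T n c‖ / ‖T n (s n)‖ := by
    simp only [Metric.tendsto_nhds, not_forall, Ultrafilter.eventually_not.symm, dist_zero_right,
      norm_div, norm_norm, not_lt, exists_prop] at hlim
    exact hlim
  have hc0 : c ≠ 0 := by
    rintro rfl
    exact hlim (by simpa only [map_zero, norm_zero, zero_div] using tendsto_const_nhds)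
  obtain ⟨ω, hω0, hω⟩ := exists_tendsto_inv_norm_smul u (s := fun n => T n c)
    (Eventually.of_forall fun n => (T n).map_ne_zero_iff.2 hc0)
  obtain ⟨β, -, hβ⟩ : ∃ β ∈ Metric.closedBall (0 : V) ε⁻¹,
      Tendsto (fun n => ‖T n c‖⁻¹ • T n (s n)) u (𝓝 β) := by
    refine (isCompact_closedBall (0 : V) ε⁻¹).ultrafilter_le_nhds
      (u.map fun n => ‖T n c‖⁻¹ • T n (s n)) (le_principal_iff.2 ?_)
    refine hlarge.mono fun n hn => (?_ : ‖T n c‖⁻¹ • T n (s n) ∈ Metric.closedBall 0 ε⁻¹)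
    rw [mem_closedBall_zero_iff, norm_smul, norm_inv, norm_norm, inv_mul_eq_div, ← inv_div]
    exact inv_anti₀ hε hn
  obtain ⟨f, hfp, hfC⟩ := C.exists_le_ker_of_notMem hp
  have hfs : Tendsto (fun n => f (s n)) u (𝓝 (f p)) :=
    (f.continuous_of_finiteDimensional.tendsto p).comp hsp
  have hβP : β ∈ P := (hP B hBC).mem_of_tendsto (Eventually.of_forall fun n =>
    Submodule.smul_mem _ _ (Submodule.mem_map_of_mem (hs n))) hβ
  have hβωP : β + f p • ω ∈ P := by
    refine (hP _ (isCompl_map_transvection hBC hfC hc)).mem_of_tendsto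
      (Eventually.of_forall fun n => Submodule.smul_mem _ ‖T n c‖⁻¹ (Submodule.mem_map_of_mem
        (Submodule.mem_map_of_mem (hs n)))) ?_
    simp only [LinearMap.transvection.apply, LinearEquiv.coe_coe, map_add, map_smul, smul_add,
      smul_comm _ (f _)]
    exact hβ.add (hfs.smul hω)
  have hωP : ω ∈ P := (P.smul_mem_iff hfp).1 ((P.add_mem_iff_right hβP).1 hβωP)
  have hωW : ω ∈ W := hW.mem_of_tendsto (Eventually.of_forall fun n =>
    Submodule.smul_mem _ _ (Submodule.mem_map_of_mem hc)) hω
  exact hω0 (Submodule.disjoint_def.1 hdisj ω hωP hωW)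

/-- The `C`-component of `s n` is negligible after applying `T n`, so the direction of `T n (s n)`
accumulates in `P`, as well as in the closed subspace `U₀`. -/
theorem not_disjoint_of_eventually_apply_mem [FiniteDimensional ℝ V] {α : Type*}
    {u : Ultrafilter α} {T : α → V ≃ₗ[ℝ] V} {C P W U₀ : Submodule ℝ V} (hdisj : Disjoint P W)
    (hP : ∀ U, IsCompl U C → SubspaceTendsto (fun n => U.map (T n).toLinearMap) u P)
    (hW : SubspaceTendsto (fun n => C.map (T n).toLinearMap) u W) {s : α → V} {p : V}
    (hsp : Tendsto s u (𝓝 p)) (hp : p ∉ C) (hs : ∀ᶠ n in u, T n (s n) ∈ U₀) :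
    ¬ Disjoint U₀ P := by
  obtain ⟨B, hpB, hBC⟩ := (Submodule.disjoint_span_singleton_of_notMem hp).symm.exists_isCompl
  rw [Submodule.span_singleton_le_iff_mem] at hpB
  let π := B.projection C hBC
  have hπ (n : α) : π (s n) ∈ B := B.projection_apply_mem hBC _
  have hπp : Tendsto (fun n => π (s n)) u (𝓝 p) := by
    have := (π.continuous_of_finiteDimensional.tendsto p).comp hsp
    rwa [show π p = p from B.projection_apply_of_mem_left hBC hpB] at this
  have hp0 : p ≠ 0 := fun h0 => hp (h0 ▸ C.zero_mem)
  obtain ⟨z, hz0, hz⟩ := exists_tendsto_inv_norm_smul u (s := fun n => T n (π (s n)))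
    ((hπp.eventually_ne hp0).mono fun n hn => (T n).map_ne_zero_iff.2 hn)
  have hzP : z ∈ P := (hP B hBC).mem_of_tendsto (Eventually.of_forall fun n =>
    Submodule.smul_mem _ _ (Submodule.mem_map_of_mem (hπ n))) hz
  let L (n : α) : V →ₗ[ℝ] V :=
    ‖T n (π (s n))‖⁻¹ • (T n).toLinearMap ∘ₗ C.projection B hBC.symm
  have hL : Tendsto (fun n => L n (s n)) u (𝓝 ((0 : V →ₗ[ℝ] V) p)) := by
    refine tendsto_linearMap_apply (fun y => tendsto_zero_iff_norm_tendsto_zero.2 ?_) hsp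
    refine (tendsto_norm_div_norm_zero_of_subspaceTendsto hBC hdisj hP hW hπ hπp hp
      (C.projection_apply_mem hBC.symm y)).congr fun n => ?_
    simp only [L, LinearMap.smul_apply, LinearMap.comp_apply, LinearEquiv.coe_coe, norm_smul,
      norm_inv, norm_norm, inv_mul_eq_div]
  have hsz : Tendsto (fun n => ‖T n (π (s n))‖⁻¹ • T n (s n)) u (𝓝 z) := by
    have hadd := hz.add hL
    rw [LinearMap.zero_apply, add_zero] at hadd
    refine hadd.congr fun n => ?_
    simp only [L, LinearMap.smul_apply, LinearMap.comp_apply, LinearEquiv.coe_coe, ← smul_add,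
      ← map_add, π, Submodule.projection_add_projection_eq_self]
  have hzU₀ : z ∈ U₀ := U₀.closed_of_finiteDimensional.mem_of_tendsto hsz
    (hs.mono fun n hn => U₀.smul_mem _ hn)
  exact fun hU₀ => hz0 (Submodule.disjoint_def.1 hU₀ z hzU₀ hzP)

/-- Equivariant, transverse, dynamics-preserving limit maps of a representation `σ`, encoded as
families of subspaces: `P` is the attracting and `W` the repelling family. -/
structure IsAnosovPair {Γ M : Type} [Group Γ] [TopologicalSpace M] [MulAction Γ M]
    (σ : Γ →* (V ≃ₗ[ℝ] V)) (P W : M → Submodule ℝ V) : Prop where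
  finrank_le : ∀ x y, Module.finrank ℝ (P x) ≤ Module.finrank ℝ (W y)
  isCompl : ∀ x y, x ≠ y → IsCompl (P x) (W y)
  map_snd : ∀ γ x, (W x).map (σ γ).toLinearMap = W (γ • x)
  subspaceTendsto_snd : ∀ x, SubspaceTendsto W (𝓝 x) (W x)
  dynamics : ∀ (g : ℕ → Γ) (x y : M), (∀ z, z ≠ y → Tendsto (fun n => g n • z) atTop (𝓝 x)) →
    (∀ z, z ≠ x → Tendsto (fun n => (g n)⁻¹ • z) atTop (𝓝 y)) → ∀ U, IsCompl U (W y) →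
      SubspaceTendsto (fun n => U.map (σ (g n)).toLinearMap) atTop (P x)

theorem IsAnosovPair.le_of_isConicalLimitPoint [FiniteDimensional ℝ V] {Γ M : Type} [Group Γ]
    [TopologicalSpace M] [MulAction Γ M] [CompactSpace M] [T2Space M] [Infinite M]
    {σ : Γ →* (V ≃ₗ[ℝ] V)} {P W : M → Submodule ℝ V} (h : IsAnosovPair σ P W)
    (hconv : IsConvergenceAction Γ M) {x : M} (hx : IsConicalLimitPoint Γ x) : P x ≤ W x := by
  intro p hp
  by_contra hpW
  obtain ⟨a, b, hab, g, hga, hgb, hginv⟩ := hx.exists_tendsto_inv_smul hconv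
  let u : Ultrafilter ℕ := Ultrafilter.of atTop
  have hu : (u : Filter ℕ) ≤ atTop := Ultrafilter.of_le atTop
  obtain ⟨U₀, hU₀W, hU₀P⟩ := exists_isCompl_disjoint (h.finrank_le b b)
  obtain ⟨s, hsU₀, hsp⟩ := (h.dynamics (fun n => (g n)⁻¹) x b hginv
    (by simpa only [inv_inv] using hgb) U₀ hU₀W).exists_tendsto hp
  refine not_disjoint_of_eventually_apply_mem (u := u) (T := fun n => σ (g n))
    (h.isCompl b a hab.symm).disjoint
    (fun U hU => (h.dynamics g b x hgb hginv U hU).mono hu) ?_ (hsp.mono_left hu) hpW ?_ hU₀P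
  · simpa only [h.map_snd] using (h.subspaceTendsto_snd a).comp (hga.mono_left hu)
  · filter_upwards [hu hsU₀] with n ⟨y, hy, hys⟩
    rw [← hys, LinearEquiv.coe_coe, ← LinearEquiv.mul_apply, ← map_mul, mul_inv_cancel, map_one]
    exact hy

end Nesting

section DecomposableMultivectors

open ExteriorAlgebra (ι ιMulti)

variable {K V : Type*} [Field K] [AddCommGroup V] [Module K V] {n : ℕ}

theorem exists_ιMulti_eq_smul {v w : Fin n → V} (hv : LinearIndependent K v)
    (hw : LinearIndependent K w) (h : ∀ i, w i ∈ Submodule.span K (Set.range v)) :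
    ∃ c : K, c ≠ 0 ∧ ιMulti K n w = c • ιMulti K n v := by
  let B := Module.Basis.span hv
  have hB (i : Fin n) : (B i : V) = v i :=
    congrArg Subtype.val (Module.Basis.span_apply hv i)
  have hdet : (ιMulti K n).compLinearMap (Submodule.span K (Set.range v)).subtype =
      (LinearMap.toSpanSingleton K _ (ιMulti K n v)).compAlternatingMap B.det := by
    refine B.ext_alternating fun σ hσ => ?_
    obtain ⟨τ, rfl⟩ : ∃ τ : Equiv.Perm (Fin n), ⇑τ = σ :=
      ⟨Equiv.ofBijective σ (Finite.injective_iff_bijective.1 hσ), rfl⟩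
    refine (AlternatingMap.map_perm _ B τ).trans (.trans ?_ (AlternatingMap.map_perm _ B τ).symm)
    simp [hB, B.det_self]
  have hwv : ιMulti K n w = B.det (fun i => ⟨w i, h i⟩) • ιMulti K n v :=
    DFunLike.congr_fun hdet fun i => (⟨w i, h i⟩ : Submodule.span K (Set.range v))
  refine ⟨_, fun h0 => ιMulti_ne_zero_iff.2 hw ?_, hwv⟩
  rw [hwv, h0, zero_smul]

theorem exists_ιMulti_eq_smul_ι_mul_ιMulti {v : Fin n → V} {w : Fin (n + 1) → V}
    (hv : LinearIndependent K v) (hw : LinearIndependent K w)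
    (hvw : Submodule.span K (Set.range v) ≤ Submodule.span K (Set.range w)) {e : V}
    (he : e ∈ Submodule.span K (Set.range w)) (he' : e ∉ Submodule.span K (Set.range v)) :
    ∃ c : K, c ≠ 0 ∧ ιMulti K (n + 1) w = c • (ι K e * ιMulti K n v) := by
  obtain ⟨c, hc, h⟩ := exists_ιMulti_eq_smul hw (linearIndependent_finCons.2 ⟨hv, he'⟩)
    (Fin.cases he fun i => hvw (Submodule.subset_span ⟨i, rfl⟩))
  exact ⟨c⁻¹, inv_ne_zero hc, by rw [← ιMulti_cons, h, inv_smul_smul₀ hc]⟩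

theorem wedgePairing_ι_mul_ιMulti_comm {a d : ℕ} (ha : Odd a) (u t : Fin a → Fin d → K)
    (e : Fin d → K) : wedgePairing K d (ιMulti K a u) (ι K e * ιMulti K a t) =
      -wedgePairing K d (ιMulti K a t) (ι K e * ιMulti K a u) := by
  rw [← ιMulti_cons, wedgePairing_ιMulti_comm, (Nat.even_mul_succ_self a).neg_one_pow, one_mul,
    ιMulti_cons, ι_mul_ιMulti_comm, ha.neg_one_pow, map_smul, LinearMap.smul_apply,
    wedgePairing_mul, neg_one_smul]

end DecomposableMultivectors

section TransverseFramePairs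

open ExteriorAlgebra (ιMulti)

theorem PluckerTendsto.tendsto_div_ιMulti {α : Type*} {l : Filter α} {a b d : ℕ}
    {f : α → Fin a → Fin d → ℝ} {v : Fin a → Fin d → ℝ}
    (h : PluckerTendsto (fun n => ιMulti ℝ a (f n)) l (ιMulti ℝ a v)) {u u₀ : Fin b → Fin d → ℝ}
    (h₀ : wedgePairing ℝ d (ιMulti ℝ b u₀) (ιMulti ℝ a v) ≠ 0) :
    Tendsto (fun n => wedgePairing ℝ d (ιMulti ℝ b u) (ιMulti ℝ a (f n)) /
        wedgePairing ℝ d (ιMulti ℝ b u₀) (ιMulti ℝ a (f n))) l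
      (𝓝 (wedgePairing ℝ d (ιMulti ℝ b u) (ιMulti ℝ a v) /
        wedgePairing ℝ d (ιMulti ℝ b u₀) (ιMulti ℝ a v))) := by
  have hsign : (-1 : ℝ) ^ (b * a) ≠ 0 := pow_ne_zero _ (neg_ne_zero.2 one_ne_zero)
  rw [wedgePairing_ιMulti_comm] at h₀
  simp only [wedgePairing_ιMulti_comm u, wedgePairing_ιMulti_comm u₀, mul_div_mul_left _ _ hsign]
  exact h _ _ (right_ne_zero_of_mul h₀)

/-- Frames `v x` of `P x` and `w x` of `W x`, in complementary dimensions, such that `P` and `W`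
are continuous and transverse. The frames themselves need not depend continuously on `x`. -/
structure IsTransverseFramePair {M : Type*} [TopologicalSpace M] {k m d : ℕ}
    (v : M → Fin k → Fin d → ℝ) (w : M → Fin m → Fin d → ℝ) : Prop where
  add_eq : k + m = d
  tendsto_fst : ∀ x, PluckerTendsto (fun y => ιMulti ℝ k (v y)) (𝓝 x) (ιMulti ℝ k (v x))
  tendsto_snd : ∀ x, PluckerTendsto (fun y => ιMulti ℝ m (w y)) (𝓝 x) (ιMulti ℝ m (w x))
  wedgePairing_ne_zero : ∀ x y, x ≠ y →
    wedgePairing ℝ d (ιMulti ℝ k (v x)) (ιMulti ℝ m (w y)) ≠ 0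

/-- The pairing of `v y` with `w z`, normalized by the base point `o` so that it does not
depend on the choice of the frames of `P y` and `W z`. -/
noncomputable def normalizedPairing {M : Type*} {k m d : ℕ} (v : M → Fin k → Fin d → ℝ)
    (w : M → Fin m → Fin d → ℝ) (o y z : M) : ℝ :=
  wedgePairing ℝ d (ιMulti ℝ k (v y)) (ιMulti ℝ m (w z)) /
    (wedgePairing ℝ d (ιMulti ℝ k (v o)) (ιMulti ℝ m (w z)) *
      wedgePairing ℝ d (ιMulti ℝ k (v y)) (ιMulti ℝ m (w o)))

namespace IsTransverseFramePair

variable {M : Type*} [TopologicalSpace M] {k m d : ℕ} {v : M → Fin k → Fin d → ℝ}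
  {w : M → Fin m → Fin d → ℝ}

theorem linearIndependent_fst [Nontrivial M] (h : IsTransverseFramePair v w) (x : M) :
    LinearIndependent ℝ (v x) := by
  obtain ⟨y, hy⟩ := exists_ne x
  exact ((wedgePairing_ne_zero_iff_isCompl h.add_eq).1 (h.wedgePairing_ne_zero x y hy.symm)).1

theorem linearIndependent_snd [Nontrivial M] (h : IsTransverseFramePair v w) (x : M) :
    LinearIndependent ℝ (w x) := by
  obtain ⟨y, hy⟩ := exists_ne x
  exact ((wedgePairing_ne_zero_iff_isCompl h.add_eq).1 (h.wedgePairing_ne_zero y x hy)).2.1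

theorem isCompl (h : IsTransverseFramePair v w) {x y : M} (hxy : x ≠ y) :
    IsCompl (Submodule.span ℝ (Set.range (v x))) (Submodule.span ℝ (Set.range (w y))) :=
  ((wedgePairing_ne_zero_iff_isCompl h.add_eq).1 (h.wedgePairing_ne_zero x y hxy)).2.2

theorem notMem_span_fst (h : IsTransverseFramePair v w) {x y : M} (hxy : x ≠ y) {e : Fin d → ℝ}
    (he : e ≠ 0) (hy : e ∈ Submodule.span ℝ (Set.range (w y))) :
    e ∉ Submodule.span ℝ (Set.range (v x)) := fun hx =>
  he (Submodule.disjoint_def.1 (h.isCompl hxy).disjoint e hx hy)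

theorem continuous_normalizedPairing_right (h : IsTransverseFramePair v w) (o y : M) :
    Continuous fun z : {x // x ≠ o} => normalizedPairing v w o y z := by
  refine continuous_iff_continuousAt.2 fun z => ?_
  have hlim := ((h.tendsto_snd z).tendsto_div_ιMulti (u := v y)
    (h.wedgePairing_ne_zero o z z.2.symm)).comp continuousAt_subtype_val
  simp only [ContinuousAt, normalizedPairing, ← div_div]
  exact hlim.div_const _

theorem continuous_normalizedPairing_left (h : IsTransverseFramePair v w) (o z : M) :
    Continuous fun y : {x // x ≠ o} => normalizedPairing v w o y z := by
  refine continuous_iff_continuousAt.2 fun y => ?_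
  have hlim := (h.tendsto_fst y (ιMulti ℝ m (w z)) _
    (h.wedgePairing_ne_zero y o y.2)).comp continuousAt_subtype_val
  simp only [ContinuousAt, normalizedPairing, mul_comm (wedgePairing ℝ d (ιMulti ℝ k (v o)) _),
    ← div_div]
  exact hlim.div_const _

theorem normalizedPairing_ne_zero (h : IsTransverseFramePair v w) {o y z : M} (hy : y ≠ o)
    (hz : z ≠ o) (hyz : y ≠ z) : normalizedPairing v w o y z ≠ 0 :=
  div_ne_zero (h.wedgePairing_ne_zero y z hyz)
    (mul_ne_zero (h.wedgePairing_ne_zero o z hz.symm) (h.wedgePairing_ne_zero y o hy))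

theorem normalizedPairing_pos_or_neg [T1Space M] (h : IsTransverseFramePair v w) {o : M}
    (ho : IsPreconnected ({o}ᶜ : Set M)) :
    (∀ y z, y ≠ o → z ≠ o → y ≠ z → 0 < normalizedPairing v w o y z * normalizedPairing v w o z y) ∨
    ∀ y z, y ≠ o → z ≠ o → y ≠ z →
      normalizedPairing v w o y z * normalizedPairing v w o z y < 0 := by
  have : PreconnectedSpace {x // x ≠ o} := isPreconnected_iff_preconnectedSpace.1 ho
  have hsign := forall_pos_or_forall_neg_of_symm
    (f := fun y z : {x // x ≠ o} => normalizedPairing v w o y z * normalizedPairing v w o z y)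
    (fun y z => mul_comm _ _)
    (fun y => (h.continuous_normalizedPairing_right o y).mul
      (h.continuous_normalizedPairing_left o y))
    (fun y z hyz => mul_ne_zero
      (h.normalizedPairing_ne_zero y.2 z.2 (Subtype.coe_ne_coe.2 hyz))
      (h.normalizedPairing_ne_zero z.2 y.2 (Subtype.coe_ne_coe.2 hyz.symm)))
  exact hsign.imp (fun hpos y z hy hz hyz => hpos ⟨y, hy⟩ ⟨z, hz⟩ (Subtype.coe_ne_coe.1 hyz))
    fun hneg y z hy hz hyz => hneg ⟨y, hy⟩ ⟨z, hz⟩ (Subtype.coe_ne_coe.1 hyz)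

/-- The quotient of the two pairings tends to `1`. -/
theorem eventually_normalizedPairing_pos_iff [T1Space M] (h : IsTransverseFramePair v w)
    {o y y' : M} (hy : y ≠ o) (hy' : y' ≠ o) : ∀ᶠ z in 𝓝[≠] o,
      (0 < normalizedPairing v w o y z ↔ 0 < normalizedPairing v w o y' z) := by
  let X (a b : M) := wedgePairing ℝ d (ιMulti ℝ k (v a)) (ιMulti ℝ m (w b))
  have hX {a b : M} (hab : a ≠ b) : X a b ≠ 0 := h.wedgePairing_ne_zero a b hab
  have hlim : Tendsto (fun z => X y z / X y' z * (X y' o / X y o)) (𝓝 o) (𝓝 1) := by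
    have := ((h.tendsto_snd o).tendsto_div_ιMulti (u := v y) (hX hy')).mul_const (X y' o / X y o)
    rwa [div_mul_div_cancel₀ (hX hy'), div_self (hX hy)] at this
  filter_upwards [nhdsWithin_le_nhds (hlim.eventually (lt_mem_nhds one_pos)), self_mem_nhdsWithin,
    nhdsWithin_le_nhds (isOpen_ne.mem_nhds hy'.symm)] with z hz hzo hzy'
  have hratio : normalizedPairing v w o y z =
      normalizedPairing v w o y' z * (X y z / X y' z * (X y' o / X y o)) := by
    have h₁ := hX hy
    have h₂ := hX hy'
    have h₃ := hX (Ne.symm hzy')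
    have h₄ := hX (Ne.symm hzo)
    simp only [normalizedPairing, X] at h₁ h₂ h₃ h₄ ⊢
    field_simp
  rw [hratio, mul_pos_iff_of_pos_right hz]

theorem exists_sphere_embedding_of_normalizedPairing_neg [CompactSpace M] [T2Space M]
    [SecondCountableTopology M] (h : IsTransverseFramePair v w) (hk : 0 < k) {o : M}
    [(𝓝[≠] o).NeBot] (ho : IsPreconnected ({o}ᶜ : Set M))
    (hneg : ∀ y z, y ≠ o → z ≠ o → y ≠ z →
      normalizedPairing v w o y z * normalizedPairing v w o z y < 0) :
    ∃ f : M → Metric.sphere (0 : EuclideanSpace ℝ (Fin (k + 1))) 1,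
      Continuous f ∧ Function.Injective f := by
  have : PreconnectedSpace {x // x ≠ o} := isPreconnected_iff_preconnectedSpace.1 ho
  have hval : Tendsto Subtype.val (comap (Subtype.val : {x // x ≠ o} → M) (𝓝 o)) (𝓝[≠] o) :=
    tendsto_nhdsWithin_iff.2 ⟨tendsto_comap, Eventually.of_forall Subtype.prop⟩
  have hbot : (comap (Subtype.val : {x // x ≠ o} → M) (𝓝 o)).NeBot :=
    mem_closure_iff_comap_neBot.1 (mem_closure_iff_nhdsWithin_neBot.2 ‹(𝓝[≠] o).NeBot›)
  have : SecondCountableTopology {x // x ≠ o} :=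
    TopologicalSpace.Subtype.secondCountableTopology {x | x ≠ o}
  obtain ⟨g, hg, hinj, hlim⟩ := exists_continuous_injective_tendsto_cocompact_of_mul_neg
    (fun y : {x // x ≠ o} => h.continuous_normalizedPairing_right o y)
    (fun y z hyz => hneg y z y.2 z.2 (Subtype.coe_ne_coe.2 hyz))
    (fun d d' => hval.eventually (h.eventually_normalizedPairing_pos_iff d.2 d'.2))
    (fun d => ((hval.mono_right nhdsWithin_le_nhds).eventually_ne d.2.symm).mono
      fun y hy => Subtype.coe_ne_coe.1 hy)
  exact exists_continuous_injective_sphere_of_tendsto_cocompact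
    (by rwa [Module.finrank_self]) hg hinj hlim

end IsTransverseFramePair

end TransverseFramePairs

section NestedFramePairs

open ExteriorAlgebra (ι ιMulti)

/-- The ratio of `v x ∧ e ∧ v z` to `v x ∧ w z`, as a linear functional of `e`. If `P z ⊆ W z` and
`e ∈ W z`, then `e ∧ v z` is a multiple of `w z` and the ratio is independent of `x`. -/
noncomputable def wedgeRatio {M : Type*} {k m d : ℕ} (v : M → Fin k → Fin d → ℝ)
    (w : M → Fin m → Fin d → ℝ) (z x : M) : (Fin d → ℝ) →ₗ[ℝ] ℝ :=
  (wedgePairing ℝ d (ιMulti ℝ k (v x)) (ιMulti ℝ m (w z)))⁻¹ •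
    (wedgePairing ℝ d (ιMulti ℝ k (v x)) ∘ₗ LinearMap.mulRight ℝ (ιMulti ℝ k (v z)) ∘ₗ ι ℝ)

theorem wedgeRatio_apply {M : Type*} {k m d : ℕ} (v : M → Fin k → Fin d → ℝ)
    (w : M → Fin m → Fin d → ℝ) (z x : M) (e : Fin d → ℝ) :
    wedgeRatio v w z x e = wedgePairing ℝ d (ιMulti ℝ k (v x)) (ι ℝ e * ιMulti ℝ k (v z)) /
      wedgePairing ℝ d (ιMulti ℝ k (v x)) (ιMulti ℝ m (w z)) :=
  inv_mul_eq_div _ _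

namespace IsTransverseFramePair

variable {M : Type*} [TopologicalSpace M] {k d : ℕ} {v : M → Fin k → Fin d → ℝ}

theorem tendsto_wedgeRatio {m : ℕ} {w : M → Fin m → Fin d → ℝ} (h : IsTransverseFramePair v w)
    {x z : M} (hxz : x ≠ z) (e : Fin d → ℝ) :
    Tendsto (fun y => wedgeRatio v w z y e) (𝓝 x) (𝓝 (wedgeRatio v w z x e)) := by
  simp only [wedgeRatio_apply]
  exact h.tendsto_fst x _ _ (h.wedgePairing_ne_zero x z hxz)

variable {w : M → Fin (k + 1) → Fin d → ℝ} {o y z : M} {e : Fin d → ℝ}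

theorem exists_wedgePairing_snd_eq_mul [Nontrivial M] (h : IsTransverseFramePair v w)
    (hvw : Submodule.span ℝ (Set.range (v z)) ≤ Submodule.span ℝ (Set.range (w z)))
    (he : e ∈ Submodule.span ℝ (Set.range (w z))) (he' : e ∉ Submodule.span ℝ (Set.range (v z))) :
    ∃ c : ℝ, c ≠ 0 ∧ ∀ θ, wedgePairing ℝ d θ (ιMulti ℝ (k + 1) (w z)) =
      c * wedgePairing ℝ d θ (ι ℝ e * ιMulti ℝ k (v z)) := by
  obtain ⟨c, hc, hw⟩ := exists_ιMulti_eq_smul_ι_mul_ιMulti (h.linearIndependent_fst z)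
    (h.linearIndependent_snd z) hvw he he'
  exact ⟨c, hc, fun θ => by rw [hw, map_smul, smul_eq_mul]⟩

theorem exists_wedgeRatio_eq [Nontrivial M] (h : IsTransverseFramePair v w)
    (hvw : Submodule.span ℝ (Set.range (v z)) ≤ Submodule.span ℝ (Set.range (w z)))
    (he : e ∈ Submodule.span ℝ (Set.range (w z))) (he' : e ∉ Submodule.span ℝ (Set.range (v z))) :
    ∃ r : ℝ, ∀ x, x ≠ z → wedgeRatio v w z x e = r := by
  obtain ⟨c, -, hw⟩ := h.exists_wedgePairing_snd_eq_mul hvw he he'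
  refine ⟨c⁻¹, fun x hx => ?_⟩
  have hne := h.wedgePairing_ne_zero x z hx
  rw [hw] at hne
  rw [wedgeRatio_apply, hw, mul_comm c, ← div_div, div_self (right_ne_zero_of_mul hne), one_div]

theorem wedgeRatio_ne_zero [Nontrivial M] (h : IsTransverseFramePair v w) (hk : Odd k)
    (hvw : Submodule.span ℝ (Set.range (v o)) ≤ Submodule.span ℝ (Set.range (w o))) (hz : z ≠ o)
    (he : e ∈ Submodule.span ℝ (Set.range (w o))) (he' : e ∉ Submodule.span ℝ (Set.range (v o))) :
    wedgeRatio v w z o e ≠ 0 := by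
  obtain ⟨c, -, hw⟩ := h.exists_wedgePairing_snd_eq_mul hvw he he'
  have hne := h.wedgePairing_ne_zero z o hz
  rw [hw, wedgePairing_ι_mul_ιMulti_comm hk] at hne
  rw [wedgeRatio_apply]
  exact div_ne_zero (neg_ne_zero.1 (right_ne_zero_of_mul hne)) (h.wedgePairing_ne_zero o z hz.symm)

theorem wedgeRatio_mul_mul_normalizedPairing_neg [Nontrivial M] (h : IsTransverseFramePair v w)
    (hk : Odd k)
    (hvw : ∀ x, Submodule.span ℝ (Set.range (v x)) ≤ Submodule.span ℝ (Set.range (w x)))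
    (hy : y ≠ o) (hz : z ≠ o) (hyz : y ≠ z) (he : e ≠ 0)
    (heo : e ∈ Submodule.span ℝ (Set.range (w o))) (hey : e ∈ Submodule.span ℝ (Set.range (w y))) :
    wedgeRatio v w z y e * wedgeRatio v w z o e *
      (normalizedPairing v w o y z * normalizedPairing v w o z y) < 0 := by
  obtain ⟨cₒ, -, hwo⟩ := h.exists_wedgePairing_snd_eq_mul (hvw o) heo
    (h.notMem_span_fst hy.symm he hey)
  obtain ⟨c, -, hwy⟩ := h.exists_wedgePairing_snd_eq_mul (hvw y) hey (h.notMem_span_fst hy he heo)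
  let N (a b : M) := wedgePairing ℝ d (ιMulti ℝ k (v a)) (ι ℝ e * ιMulti ℝ k (v b))
  let X (a b : M) := wedgePairing ℝ d (ιMulti ℝ k (v a)) (ιMulti ℝ (k + 1) (w b))
  have hN (a b : M) : N a b = -N b a := wedgePairing_ι_mul_ιMulti_comm hk _ _ e
  have hXo (a : M) : X a o = cₒ * N a o := hwo _
  have hXy (a : M) : X a y = c * N a y := hwy _
  have hX {a b : M} (hab : a ≠ b) : X a b ≠ 0 := h.wedgePairing_ne_zero a b hab
  have hXyz := hX hyz
  have hXoz := hX hz.symm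
  obtain ⟨hcₒ, hNyo⟩ := mul_ne_zero_iff.1 (hXo y ▸ hX hy)
  have hNzo := right_ne_zero_of_mul (hXo z ▸ hX hz)
  obtain ⟨hc, hNzy⟩ := mul_ne_zero_iff.1 (hXy z ▸ hX hyz.symm)
  have hsquare : wedgeRatio v w z y e * wedgeRatio v w z o e *
      (normalizedPairing v w o y z * normalizedPairing v w o z y) =
        -(N z y / (X o z * cₒ * N y o)) ^ 2 := by
    simp only [wedgeRatio_apply, normalizedPairing]
    change N y z / X y z * (N o z / X o z) *
      (X y z / (X o z * X y o) * (X z y / (X o y * X z o))) = _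
    rw [hXo, hXo, hXy, hXy, hN y z, hN o z, hN o y]
    field_simp
  rw [hsquare, neg_lt_zero]
  positivity

theorem eq_of_mem_span_snd [Nontrivial M] (h : IsTransverseFramePair v w) (hk : Odd k)
    (hvw : ∀ x, Submodule.span ℝ (Set.range (v x)) ≤ Submodule.span ℝ (Set.range (w x)))
    (hpos : ∀ y z, y ≠ o → z ≠ o → y ≠ z →
      0 < normalizedPairing v w o y z * normalizedPairing v w o z y)
    (hy : y ≠ o) (hz : z ≠ o) (he : e ≠ 0) (heo : e ∈ Submodule.span ℝ (Set.range (w o)))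
    (hey : e ∈ Submodule.span ℝ (Set.range (w y)))
    (hez : e ∈ Submodule.span ℝ (Set.range (w z))) : y = z := by
  by_contra hyz
  obtain ⟨r, hr⟩ := h.exists_wedgeRatio_eq (hvw z) hez (h.notMem_span_fst hz he heo)
  have hneg := h.wedgeRatio_mul_mul_normalizedPairing_neg hk hvw hy hz hyz he heo hey
  rw [hr y hyz, hr o hz.symm] at hneg
  exact hneg.not_ge (mul_nonneg (mul_self_nonneg r) (hpos y z hy hz hyz).le)

theorem not_tendsto_of_mem_span_snd [Nontrivial M] [T1Space M] (h : IsTransverseFramePair v w)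
    (hk : Odd k)
    (hvw : ∀ x, Submodule.span ℝ (Set.range (v x)) ≤ Submodule.span ℝ (Set.range (w x)))
    (hpos : ∀ y z, y ≠ o → z ≠ o → y ≠ z →
      0 < normalizedPairing v w o y z * normalizedPairing v w o z y)
    {α : Type*} {l : Filter α} [l.NeBot] {p : α → M} (hp : Tendsto p l (𝓝[≠] o))
    {s : α → Fin d → ℝ} (hso : ∀ n, s n ∈ Submodule.span ℝ (Set.range (w o)))
    (hsp : ∀ n, s n ∈ Submodule.span ℝ (Set.range (w (p n))))
    (he : e ∉ Submodule.span ℝ (Set.range (v o))) : ¬ Tendsto s l (𝓝 e) := by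
  intro hs
  have heo : e ∈ Submodule.span ℝ (Set.range (w o)) :=
    (Submodule.closed_of_finiteDimensional _).mem_of_tendsto hs (Eventually.of_forall hso)
  have he0 : e ≠ 0 := fun h0 => he (h0 ▸ Submodule.zero_mem _)
  obtain ⟨z, hz⟩ := exists_ne o
  obtain ⟨hpo, hpne⟩ := tendsto_nhdsWithin_iff.1 hp
  have hlim : Tendsto (fun n => wedgeRatio v w z (p n) (s n) * wedgeRatio v w z o (s n)) l
      (𝓝 (wedgeRatio v w z o e * wedgeRatio v w z o e)) :=
    (tendsto_linearMap_apply (fun e' => (h.tendsto_wedgeRatio hz.symm e').comp hpo) hs).mul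
      (tendsto_linearMap_apply (fun _ => tendsto_const_nhds) hs)
  have hsq := mul_self_pos.2 (h.wedgeRatio_ne_zero hk (hvw o) hz heo he)
  obtain ⟨n, hn, hno, hnz, hn0⟩ := ((hlim.eventually (lt_mem_nhds hsq)).and
    (hpne.and ((hpo.eventually_ne hz.symm).and (hs.eventually_ne he0)))).exists
  exact (h.wedgeRatio_mul_mul_normalizedPairing_neg hk hvw hno hz hnz hn0 (hso n) (hsp n)).not_gt
    (mul_pos hn (hpos _ z hno hz hnz))

theorem wedgePairing_snd_fst_ne_zero {m : ℕ} {w : M → Fin m → Fin d → ℝ}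
    (h : IsTransverseFramePair v w) (hy : y ≠ o) :
    wedgePairing ℝ d (ιMulti ℝ m (w y)) (ιMulti ℝ k (v o)) ≠ 0 := by
  have hne := h.wedgePairing_ne_zero o y hy.symm
  rw [wedgePairing_ιMulti_comm] at hne
  exact right_ne_zero_of_mul hne

/-- The displacement along `P o` taking a point of `W y` to `e`. -/
noncomputable def wedgeChart {M : Type*} {k m d : ℕ} (v : M → Fin k → Fin d → ℝ)
    (w : M → Fin m → Fin d → ℝ) (o : M) (e : Fin d → ℝ) (y : M) :
    Submodule.span ℝ (Set.range (v o)) :=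
  ⟨e - cramerProj (ιMulti ℝ m (w y)) (v o) e, sub_cramerProj_mem _ _ _⟩

theorem sub_wedgeChart_mem {m : ℕ} {w : M → Fin m → Fin d → ℝ} (h : IsTransverseFramePair v w)
    (hy : y ≠ o) (e : Fin d → ℝ) :
    e - wedgeChart v w o e y ∈ Submodule.span ℝ (Set.range (w y)) := by
  rw [wedgeChart, sub_sub_cancel]
  exact cramerProj_mem (by rw [add_comm, h.add_eq]) (h.wedgePairing_snd_fst_ne_zero hy) e

theorem continuous_wedgeChart {m : ℕ} {w : M → Fin m → Fin d → ℝ} (h : IsTransverseFramePair v w)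
    (o : M) (e : Fin d → ℝ) : Continuous fun y : {x // x ≠ o} => wedgeChart v w o e y := by
  refine Continuous.subtype_mk (continuous_iff_continuousAt.2 fun y => ?_) _
  have hlim : Tendsto (fun y => cramerProj (ιMulti ℝ m (w y)) (v o) e) (𝓝 (y : M)) _ :=
    (h.tendsto_snd y).tendsto_cramerProj (h.wedgePairing_snd_fst_ne_zero y.2) e
  exact tendsto_const_nhds.sub (hlim.comp continuousAt_subtype_val)

/-- The affine subspace `e + P o` of `W o` misses `0`, and each `W y` meets it in one point. -/
theorem exists_sphere_embedding_of_normalizedPairing_pos [Nontrivial M] [CompactSpace M]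
    [T2Space M] (h : IsTransverseFramePair v w) (hk : Odd k)
    (hvw : ∀ x, Submodule.span ℝ (Set.range (v x)) ≤ Submodule.span ℝ (Set.range (w x)))
    (hpos : ∀ y z, y ≠ o → z ≠ o → y ≠ z →
      0 < normalizedPairing v w o y z * normalizedPairing v w o z y) :
    ∃ f : M → Metric.sphere (0 : EuclideanSpace ℝ (Fin (k + 1))) 1,
      Continuous f ∧ Function.Injective f := by
  have hfinrank := finrank_span_eq_card (h.linearIndependent_fst o)
  obtain ⟨e, heo, heP⟩ := SetLike.exists_of_lt ((hvw o).lt_of_ne fun heq => by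
    rw [heq, finrank_span_eq_card (h.linearIndependent_snd o)] at hfinrank
    simp only [Fintype.card_fin, Nat.succ_ne_self] at hfinrank)
  have hmem (p : Submodule.span ℝ (Set.range (v o))) :
      e - p ∈ Submodule.span ℝ (Set.range (w o)) := Submodule.sub_mem _ heo (hvw o p.2)
  have hnotMem (p : Submodule.span ℝ (Set.range (v o))) :
      e - p ∉ Submodule.span ℝ (Set.range (v o)) := by
    rwa [Submodule.sub_mem_iff_left _ p.2]
  refine exists_continuous_injective_sphere_of_tendsto_cocompact
    (by rw [hfinrank, Fintype.card_fin]) (h.continuous_wedgeChart o e) (fun y z hyz => ?_)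
    (tendsto_cocompact_of_forall_ultrafilter fun u hu p hup => ?_)
  · have hez := h.sub_wedgeChart_mem z.2 e
    rw [← hyz] at hez
    exact Subtype.ext (h.eq_of_mem_span_snd hk hvw hpos y.2 z.2
      (fun h0 => hnotMem _ (h0 ▸ Submodule.zero_mem _)) (hmem _) (h.sub_wedgeChart_mem y.2 e) hez)
  · exact h.not_tendsto_of_mem_span_snd hk hvw hpos (p := Subtype.val)
      (tendsto_nhdsWithin_iff.2 ⟨tendsto_comap.mono_left hu, Eventually.of_forall Subtype.prop⟩)
      (fun y => hmem (wedgeChart v w o e y)) (fun y => h.sub_wedgeChart_mem y.2 e) (hnotMem p)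
      (tendsto_const_nhds.sub ((continuous_subtype_val.tendsto p).comp hup))

theorem exists_sphere_embedding [ConnectedSpace M] [Nontrivial M] [CompactSpace M] [T2Space M]
    [SecondCountableTopology M] (h : IsTransverseFramePair v w) (hk : Odd k)
    (hvw : ∀ x, Submodule.span ℝ (Set.range (v x)) ≤ Submodule.span ℝ (Set.range (w x))) :
    ∃ f : M → Metric.sphere (0 : EuclideanSpace ℝ (Fin (k + 1))) 1,
      Continuous f ∧ Function.Injective f := by
  obtain ⟨o, ho⟩ := exists_isPreconnected_compl_singleton (F := M)
  rcases h.normalizedPairing_pos_or_neg ho with hpos | hneg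
  · exact h.exists_sphere_embedding_of_normalizedPairing_pos hk hvw hpos
  · exact h.exists_sphere_embedding_of_normalizedPairing_neg hk.pos ho hneg

end IsTransverseFramePair

end NestedFramePairs

section PluckerLifts

open ExteriorAlgebra (ιMulti)

theorem wedgeMk_ne_zero_iff {K V : Type*} [Field K] [AddCommGroup V] [Module K V] {n : ℕ}
    {v : Fin n → V} : wedgeMk K n v ≠ 0 ↔ LinearIndependent K v := by
  rw [← ιMulti_ne_zero_iff, ne_eq, ← Submodule.coe_eq_zero, wedgeMk]

theorem span_range_eq_of_mk_wedgeMk_eq {K V : Type*} [Field K] [AddCommGroup V] [Module K V]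
    {n : ℕ} {v w : Fin n → V} {hv : wedgeMk K n v ≠ 0} {hw : wedgeMk K n w ≠ 0}
    (h : Projectivization.mk K (wedgeMk K n v) hv = Projectivization.mk K (wedgeMk K n w) hw) :
    Submodule.span K (Set.range v) = Submodule.span K (Set.range w) := by
  obtain ⟨c, hc⟩ := (Projectivization.mk_eq_mk_iff K _ _ hv hw).1 h
  exact span_range_eq_of_ιMulti_eq_smul (wedgeMk_ne_zero_iff.1 hw) (wedgeMk_ne_zero_iff.1 hv)
    c.ne_zero (congrArg Subtype.val hc).symm

theorem map_toLin'_span_range {R n : Type*} [CommRing R] [Fintype n] [DecidableEq n]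
    (A : Matrix.SpecialLinearGroup n R) {a : ℕ} (v : Fin a → n → R) :
    (Submodule.span R (Set.range v)).map (Matrix.SpecialLinearGroup.toLin' A).toLinearMap =
      Submodule.span R (Set.range fun i => (A : Matrix n n R) *ᵥ v i) := by
  rw [Submodule.map_span, ← Set.range_comp]
  rfl

theorem wedgeMk_mulVec_ne_zero {K n : Type*} [Field K] [Fintype n] [DecidableEq n]
    (A : Matrix.SpecialLinearGroup n K) {a : ℕ} {v : Fin a → n → K} (hv : wedgeMk K a v ≠ 0) :
    wedgeMk K a (fun i => (A : Matrix n n K) *ᵥ v i) ≠ 0 :=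
  wedgeMk_ne_zero_iff.2 ((wedgeMk_ne_zero_iff.1 hv).map' _
    (Matrix.SpecialLinearGroup.toLin' A).ker)

/-- `v x` is a frame of the subspace whose Plücker line is `ξ x`. -/
def IsPluckerLift {M : Type*} {a d : ℕ} (ξ : M → Projectivization ℝ (⋀[ℝ]^a (Fin d → ℝ)))
    (v : M → Fin a → Fin d → ℝ) : Prop :=
  ∀ x, ∃ hne : wedgeMk ℝ a (v x) ≠ 0, ξ x = Projectivization.mk ℝ (wedgeMk ℝ a (v x)) hne

namespace IsPluckerLift

theorem linearIndependent {M : Type*} {a d : ℕ} {ξ : M → Projectivization ℝ (⋀[ℝ]^a (Fin d → ℝ))}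
    {v : M → Fin a → Fin d → ℝ} (hv : IsPluckerLift ξ v) (x : M) : LinearIndependent ℝ (v x) :=
  wedgeMk_ne_zero_iff.1 (hv x).1

theorem pluckerTendsto {M : Type*} [TopologicalSpace M] {a d : ℕ}
    {ξ : M → Projectivization ℝ (⋀[ℝ]^a (Fin d → ℝ))} {v : M → Fin a → Fin d → ℝ}
    (hv : IsPluckerLift ξ v) (hξ : Continuous ξ) (x : M) :
    PluckerTendsto (fun y => ιMulti ℝ a (v y)) (𝓝 x) (ιMulti ℝ a (v x)) := by
  choose hne hmk using hv
  refine pluckerTendsto_of_tendsto_mk hne (hne x) ?_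
  simp only [← hmk]
  exact hξ.tendsto x

end IsPluckerLift

namespace IsRelAnosov

variable {Γ M : Type} [Group Γ] [TopologicalSpace M] [MulAction Γ M] {k d : ℕ}
  {ρ : Γ →* Matrix.SpecialLinearGroup (Fin d) ℝ} {v : M → Fin k → Fin d → ℝ}
  {w : M → Fin (d - k) → Fin d → ℝ} {ξk : M → Projectivization ℝ (⋀[ℝ]^k (Fin d → ℝ))}
  {ξdk : M → Projectivization ℝ (⋀[ℝ]^(d - k) (Fin d → ℝ))}

theorem isTransverseFramePair (h : IsRelAnosov k ρ ξk ξdk) (hkd : k ≤ d)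
    (hv : IsPluckerLift ξk v) (hw : IsPluckerLift ξdk w) : IsTransverseFramePair v w where
  add_eq := Nat.add_sub_of_le hkd
  tendsto_fst := hv.pluckerTendsto h.continuous_fst
  tendsto_snd := hw.pluckerTendsto h.continuous_snd
  wedgePairing_ne_zero x y hxy := (wedgePairing_ne_zero_iff (Nat.add_sub_of_le hkd)).2
    (h.transverse x y hxy _ _ _ _ (hv x).2 (hw y).2)

theorem map_span_snd (h : IsRelAnosov k ρ ξk ξdk) (hw : IsPluckerLift ξdk w) (γ : Γ) (x : M) :
    (Submodule.span ℝ (Set.range (w x))).map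
      (Matrix.SpecialLinearGroup.toLin' (ρ γ)).toLinearMap =
        Submodule.span ℝ (Set.range (w (γ • x))) := by
  rw [map_toLin'_span_range]
  obtain ⟨hne, hmk⟩ := hw x
  obtain ⟨_, hmk'⟩ := hw (γ • x)
  exact span_range_eq_of_mk_wedgeMk_eq
    ((h.equivariant_snd γ x (w x) hne (wedgeMk_mulVec_ne_zero _ hne) hmk).symm.trans hmk')

theorem subspaceTendsto_map (h : IsRelAnosov k ρ ξk ξdk) (hkd : k ≤ d) (hv : IsPluckerLift ξk v)
    (hw : IsPluckerLift ξdk w) {g : ℕ → Γ} {x y : M}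
    (hg : ∀ z, z ≠ y → Tendsto (fun n => g n • z) atTop (𝓝 x))
    (hg' : ∀ z, z ≠ x → Tendsto (fun n => (g n)⁻¹ • z) atTop (𝓝 y)) {U : Submodule ℝ (Fin d → ℝ)}
    (hU : IsCompl U (Submodule.span ℝ (Set.range (w y)))) :
    SubspaceTendsto (fun n => U.map (Matrix.SpecialLinearGroup.toLin' (ρ (g n))).toLinearMap) atTop
      (Submodule.span ℝ (Set.range (v x))) := by
  have hdim := Submodule.finrank_add_eq_of_isCompl hU
  rw [finrank_span_eq_card (hw.linearIndependent y), Fintype.card_fin,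
    Module.finrank_fin_fun] at hdim
  obtain ⟨u, hu, rfl⟩ := exists_linearIndependent_span_range_eq (S := U) (b := k) (by omega)
  have huw := (wedgePairing_ne_zero_iff (Nat.add_sub_of_le hkd)).1
    ((wedgePairing_ne_zero_iff_isCompl (Nat.add_sub_of_le hkd)).2
      ⟨hu, hw.linearIndependent y, hU⟩)
  obtain ⟨_, hmkx⟩ := hv x
  have hlim := h.dynamics g x y hg hg' _ _ (hw y).2 u
    (fun n => wedgeMk_mulVec_ne_zero _ (wedgeMk_ne_zero_iff.2 hu)) huw
  rw [hmkx] at hlim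
  simp only [map_toLin'_span_range]
  exact (pluckerTendsto_of_tendsto_mk _ _ hlim).subspaceTendsto (hv.linearIndependent x)

theorem isAnosovPair (h : IsRelAnosov k ρ ξk ξdk) (hkd : k ≤ d - k) (hv : IsPluckerLift ξk v)
    (hw : IsPluckerLift ξdk w) :
    IsAnosovPair (Matrix.SpecialLinearGroup.toLin'.comp ρ)
      (fun x => Submodule.span ℝ (Set.range (v x)))
      fun x => Submodule.span ℝ (Set.range (w x)) where
  finrank_le x y := by
    rwa [finrank_span_eq_card (hv.linearIndependent x), finrank_span_eq_card
      (hw.linearIndependent y), Fintype.card_fin, Fintype.card_fin]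
  isCompl _ _ := (h.isTransverseFramePair (hkd.trans (Nat.sub_le d k)) hv hw).isCompl
  map_snd := h.map_span_snd hw
  subspaceTendsto_snd x :=
    (hw.pluckerTendsto h.continuous_snd x).subspaceTendsto (hw.linearIndependent x)
  dynamics _ _ _ hg hg' _ := h.subspaceTendsto_map (hkd.trans (Nat.sub_le d k)) hv hw hg hg'

theorem exists_isTransverseFramePair_isAnosovPair (h : IsRelAnosov k ρ ξk ξdk) {m : ℕ}
    (hkm : k ≤ m) (hd : k + m = d) :
    ∃ (v : M → Fin k → Fin d → ℝ) (w : M → Fin m → Fin d → ℝ), IsTransverseFramePair v w ∧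
      IsAnosovPair (Matrix.SpecialLinearGroup.toLin'.comp ρ)
        (fun x => Submodule.span ℝ (Set.range (v x)))
        fun x => Submodule.span ℝ (Set.range (w x)) := by
  obtain rfl : m = d - k := Nat.eq_sub_of_add_eq' hd
  choose v _ hv using h.decomposable_fst
  choose w _ hw using h.decomposable_snd
  exact ⟨v, w, h.isTransverseFramePair (hkm.trans (Nat.sub_le d k)) hv hw,
    h.isAnosovPair hkm hv hw⟩

end IsRelAnosov

end PluckerLifts

theorem IsBoundaryPair.infinite {Γ M : Type} [Group Γ] [TopologicalSpace M] [MulAction Γ M]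
    [Nonempty M] (h : IsBoundaryPair Γ M) : Infinite M := by
  obtain ⟨x⟩ := ‹Nonempty M›
  have := h.metrizable
  have := h.perfect x
  exact Set.infinite_univ_iff.1 (infinite_of_mem_nhds x univ_mem)

/-- **Theorem (k-Anosov into SL_{2k+1}(ℝ), k odd: boundary embeds in `S^k`).**
If `Δ` is a one-ended hyperbolic group, presented as a uniform boundary pair `(Δ, M)` with
`M` connected, `k` is odd and `ρ : Δ → SL_{2k+1}(ℝ)` is `k`-Anosov, then `M ≅ ∂_∞Δ` admits a
continuous injection into the `k`-sphere. -/
theorem anosov_SL_2k1_boundary_embeds_in_sphere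
    {Δ M : Type} [Group Δ] [TopologicalSpace M] [MulAction Δ M]
    (hBP : IsBoundaryPair Δ M)
    (huniform : ∀ x : M, IsConicalLimitPoint Δ x)
    (hconn : ConnectedSpace M)
    (k : ℕ) (hodd : Odd k)
    (ρ : Δ →* Matrix.SpecialLinearGroup (Fin (2 * k + 1)) ℝ)
    (ξk : M → Projectivization ℝ (⋀[ℝ]^k (Fin (2 * k + 1) → ℝ)))
    (ξdk : M → Projectivization ℝ (⋀[ℝ]^((2 * k + 1) - k) (Fin (2 * k + 1) → ℝ)))
    (hAnosov : IsRelAnosov k ρ ξk ξdk) :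
    ∃ f : M → Metric.sphere (0 : EuclideanSpace ℝ (Fin (k + 1))) 1,
      Continuous f ∧ Function.Injective f := by
  have := hBP.compact
  have := hBP.metrizable
  have := hBP.infinite
  have : SecondCountableTopology M :=
    let _ := TopologicalSpace.metrizableSpaceMetric M
    inferInstance
  obtain ⟨v, w, hvw, hpair⟩ :=
    hAnosov.exists_isTransverseFramePair_isAnosovPair k.le_succ (by omega)
  exact hvw.exists_sphere_embedding hodd fun x =>
    hpair.le_of_isConicalLimitPoint hBP.conv (huniform x)
end

section
/- Let M be a compact connected metrizable topological space with more than one point that is not homeomorphic to the circle S¹. Then there exist distinct points x, y ∈ M such that M ∖ {x, y} is connected. -/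
/-- The unit circle `S¹`. -/
abbrev Circle1 : Type := Metric.sphere (0 : EuclideanSpace ℝ (Fin 2)) 1

/-!
Suppose that removing any two points disconnects `M`. Then no point disconnects `M`: by a minimality
argument each side of a cut point `x` contains a point that does not disconnect `M`, and removing
two such points, one from each side, leaves two connected sets that meet in `x`.

Now let `{a, b}ᶜ` be separated by open sets `U` and `V`. For `p ∈ U` and `q ∈ V` the removal of
`{p, q}` must separate `a` from `b`; otherwise the side not containing `a` and `b` would lie in both
`U` and `V`. So in the continuum `Vᶜ = U ∪ {a, b}` every further point separates `a` from `b`. These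
cuts order `Vᶜ` linearly, the order induces the topology, and a separable compact connected ordered
space is an arc. By symmetry `Uᶜ` is an arc from `a` to `b` too, and the two arcs glue to a circle.
-/

open Set TopologicalSpace

/-- `U` and `V` are disjoint open sets with union `S`. Either part may be empty, so that in an
order topology `Iio p` and `Ioi p` always separate `{p}ᶜ`, even when `p` is an endpoint. -/
structure IsSeparation {X : Type*} [TopologicalSpace X] (S U V : Set X) : Prop where
  isOpen_left : IsOpen U
  isOpen_right : IsOpen V
  disjoint : Disjoint U V
  union_eq : U ∪ V = S

section Separation

variable {X : Type*} [TopologicalSpace X] {S U V U' V' G₁ G₂ C : Set X} {a b p q x : X}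

theorem exists_isSeparation_of_not_isPreconnected (hS : IsOpen S) (h : ¬IsPreconnected S) :
    ∃ U V, IsSeparation S U V ∧ U.Nonempty ∧ V.Nonempty := by
  rw [isPreconnected_iff_subset_of_disjoint] at h
  push Not at h
  obtain ⟨U, V, hU, hV, hcover, hdisj, hSU, hSV⟩ := h
  obtain ⟨x, hxS, hxU⟩ := not_subset.mp hSU
  obtain ⟨y, hyS, hyV⟩ := not_subset.mp hSV
  refine ⟨S ∩ U, S ∩ V, ⟨hS.inter hU, hS.inter hV, ?_, ?_⟩, ⟨y, hyS, ?_⟩, ⟨x, hxS, ?_⟩⟩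
  · rw [disjoint_iff_inter_eq_empty, ← inter_inter_distrib_left, hdisj]
  · rw [← inter_union_distrib_left, inter_eq_left.mpr hcover]
  · exact (hcover hyS).resolve_right hyV
  · exact (hcover hxS).resolve_left hxU

namespace IsSeparation

protected theorem symm (h : IsSeparation S U V) : IsSeparation S V U :=
  ⟨h.isOpen_right, h.isOpen_left, h.disjoint.symm, union_comm V U ▸ h.union_eq⟩

theorem mem_iff (h : IsSeparation S U V) (z : X) : z ∈ S ↔ z ∈ U ∨ z ∈ V := by
  rw [← h.union_eq, mem_union]

theorem subset_left (h : IsSeparation S U V) : U ⊆ S := h.union_eq ▸ subset_union_left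

theorem subset_right (h : IsSeparation S U V) : V ⊆ S := h.symm.subset_left

theorem compl_left (h : IsSeparation S U V) : Uᶜ = Sᶜ ∪ V := by
  ext z
  have := h.mem_iff z
  have := h.disjoint.notMem_of_mem_left (a := z)
  grind

theorem isPreconnected_insert_left (h : IsSeparation (C \ {x}) U V) (hC : IsPreconnected C)
    (hx : x ∈ C) : IsPreconnected (insert x U) := by
  have hUV := h.disjoint.notMem_of_mem_left
  have : x ∉ U := fun hxU ↦ (h.subset_left hxU).2 rfl
  have hC_subset : C ⊆ insert x (U ∪ V) := by rw [h.union_eq]; grind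
  rw [isPreconnected_iff_subset_of_disjoint]
  intro O₁ O₂ hO₁ hO₂ hcover hdisj
  wlog hxO₁ : x ∈ O₁ generalizing O₁ O₂
  · have hxO₂ : x ∈ O₂ := (hcover (mem_insert x U)).resolve_left hxO₁
    exact (this O₂ O₁ hO₂ hO₁ (by rwa [union_comm]) (by rwa [inter_comm O₂]) hxO₂).symm
  -- `V` is absorbed by the side of `x`, so a cover of `insert x U` extends to one of `C`.
  have hC_left : C ⊆ O₁ ∪ V := by
    have hdisj' : Disjoint (O₁ ∪ V) (O₂ ∩ U) := by
      refine Set.disjoint_left.mpr fun y hy hyU ↦ hy.elim (fun hyO₁ ↦ ?_) (hUV hyU.2)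
      exact (hdisj ▸ ⟨.inr hyU.2, hyO₁, hyU.1⟩ : y ∈ (∅ : Set X))
    refine hC.subset_left_of_subset_union (hO₁.union h.isOpen_right)
      (hO₂.inter h.isOpen_left) hdisj' ?_ ⟨x, hx, .inl hxO₁⟩
    grind
  left
  have := h.subset_left
  grind

theorem isPreconnected_insert_right (h : IsSeparation (C \ {x}) U V) (hC : IsPreconnected C)
    (hx : x ∈ C) : IsPreconnected (insert x V) :=
  h.symm.isPreconnected_insert_left hC hx

theorem isPreconnected_insert_left_sdiff_singleton [T1Space X] (h : IsSeparation {x}ᶜ U V)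
    (hp : IsPreconnected ({p}ᶜ : Set X)) (hpU : p ∈ U) : IsPreconnected (insert x (U \ {p})) := by
  have hxp : x ∈ ({p}ᶜ : Set X) := fun hxp ↦ h.subset_left hpU hxp.symm
  have hpV : p ∉ V := h.disjoint.notMem_of_mem_left hpU
  have hsep : IsSeparation ({p}ᶜ \ {x}) (U \ {p}) V :=
    { isOpen_left := h.isOpen_left.sdiff isClosed_singleton
      isOpen_right := h.isOpen_right
      disjoint := h.disjoint.mono_left sdiff_subset
      union_eq := by
        have := h.mem_iff
        grind }
  exact hsep.isPreconnected_insert_left hp hxp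

theorem insert_left_subset [PreconnectedSpace X] (h : IsSeparation {p}ᶜ U V)
    (h' : IsSeparation {q}ᶜ U' V') (hq : q ∈ V) (hne : (insert p U ∩ U').Nonempty) :
    insert p U ⊆ U' := by
  have hconn : IsPreconnected (insert p U) :=
    (compl_eq_univ_sdiff {p} ▸ h).isPreconnected_insert_left isPreconnected_univ (mem_univ p)
  have hsub : insert p U ⊆ {q}ᶜ := by
    have := h.disjoint.notMem_of_mem_right hq
    have := h.subset_right hq
    grind
  exact hconn.subset_left_of_subset_union h'.isOpen_left h'.isOpen_right h'.disjoint
    (hsub.trans h'.union_eq.superset) hne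

end IsSeparation

theorem exists_isMin_of_isClosed_Iic [CompactSpace X] [Nonempty U] [Preorder U]
    (h : ∀ p : U, IsClosed (Subtype.val '' Iic p)) : ∃ p : U, IsMin p := by
  refine zorn_le_nonempty (α := Uᵒᵈ) fun c hc hc_ne ↦ ?_
  have := hc_ne.to_subtype
  let K (p : c) : Set X := Subtype.val '' Iic (OrderDual.ofDual p.1)
  have hK : Antitone K := fun p q hpq ↦ image_mono (Iic_subset_Iic.mpr hpq)
  obtain ⟨x, hx⟩ : (⋂ p, K p).Nonempty :=
    IsCompact.nonempty_iInter_of_directed_nonempty_isCompact_isClosed K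
      (fun p q ↦ (hc.total p.2 q.2).elim (fun hpq ↦ ⟨q, hK hpq, subset_rfl⟩)
        fun hqp ↦ ⟨p, subset_rfl, hK hqp⟩)
      (fun p ↦ nonempty_Iic.image _) (fun p ↦ (h _).isCompact) fun p ↦ h _
  rw [mem_iInter] at hx
  obtain ⟨r, -, rfl⟩ := hx (Classical.arbitrary c)
  exact ⟨r, fun p hp ↦ (Subtype.val_injective.mem_set_image (s := Iic p)).mp (hx ⟨p, hp⟩)⟩

theorem exists_isPreconnected_compl_singleton_s15 [CompactSpace X] [T1Space X] [PreconnectedSpace X]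
    (h : IsSeparation {x}ᶜ U V) (hU : U.Nonempty) : ∃ p ∈ U, IsPreconnected ({p}ᶜ : Set X) := by
  by_contra! hcut
  have hsep (p : U) : ∃ A B, IsSeparation {↑p}ᶜ A B ∧ A.Nonempty ∧ x ∈ B := by
    obtain ⟨A, B, hAB, hA, hB⟩ :=
      exists_isSeparation_of_not_isPreconnected isOpen_compl_singleton (hcut p p.2)
    have hxp : x ∈ ({↑p}ᶜ : Set X) := fun hxp ↦ h.subset_left p.2 hxp.symm
    rw [← hAB.union_eq] at hxp
    exact hxp.elim (fun hxA ↦ ⟨B, A, hAB.symm, hB, hxA⟩) fun hxB ↦ ⟨A, B, hAB, hA, hxB⟩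
  choose A B hAB hA hxB using hsep
  have hA_subset (p : U) : insert ↑p (A p) ⊆ U := by
    have hV := h.symm.insert_left_subset (hAB p).symm p.2 ⟨x, mem_insert x V, hxB p⟩
    have := h.mem_iff
    have := (hAB p).mem_iff
    have := (hAB p).disjoint.notMem_of_mem_left
    grind
  have hA_mono (p q : U) (hq : ↑q ∈ A p) : insert ↑q (A q) ⊆ A p := by
    have hB := (hAB p).symm.insert_left_subset (hAB q).symm hq ⟨x, .inr (hxB p), hxB q⟩
    have := (hAB p).mem_iff
    have := (hAB q).mem_iff
    have := (hAB q).disjoint.notMem_of_mem_left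
    grind
  let _ : Preorder U :=
    { le q p := ↑q ∈ insert ↑p (A p)
      le_refl p := mem_insert _ _
      le_trans p q r := by
        rintro hpq (hqr | hqr)
        · rwa [← Subtype.ext hqr]
        · exact .inr (hA_mono r q hqr hpq) }
  have hIic (p : U) : Subtype.val '' Iic p = (B p)ᶜ := by
    rw [(hAB p).symm.compl_left, compl_compl, singleton_union]
    exact (Subtype.image_preimage_val U _).trans (inter_eq_right.mpr (hA_subset p))
  have := hU.to_subtype
  obtain ⟨p, hp⟩ := exists_isMin_of_isClosed_Iic fun p : U ↦
    hIic p ▸ (hAB p).isOpen_right.isClosed_compl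
  obtain ⟨q, hq⟩ := hA p
  let q' : U := ⟨q, hA_subset p (.inr hq)⟩
  have hpq : p ≤ q' := hp (.inr hq)
  exact (hAB p).subset_left (hA_mono p q' hq hpq) rfl

theorem isPreconnected_compl_singleton_of_pairwise [CompactSpace X] [T1Space X]
    [PreconnectedSpace X] (H : Pairwise fun x y : X ↦ ¬IsPreconnected ({x, y}ᶜ : Set X)) (x : X) :
    IsPreconnected ({x}ᶜ : Set X) := by
  by_contra hx
  obtain ⟨U, V, h, hU, hV⟩ := exists_isSeparation_of_not_isPreconnected isOpen_compl_singleton hx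
  obtain ⟨p, hpU, hp⟩ := exists_isPreconnected_compl_singleton_s15 h hU
  obtain ⟨q, hqV, hq⟩ := exists_isPreconnected_compl_singleton_s15 h.symm hV
  refine H (h.disjoint.ne_of_mem hpU hqV) ?_
  convert (h.isPreconnected_insert_left_sdiff_singleton hp hpU).union x (mem_insert _ _)
    (mem_insert _ _) (h.symm.isPreconnected_insert_left_sdiff_singleton hq hqV) using 1
  have := h.mem_iff
  have := h.disjoint.notMem_of_mem_left hpU
  have := h.disjoint.notMem_of_mem_right hqV
  grind

theorem IsSeparation.preimage {Y : Type*} [TopologicalSpace Y] {f : Y → X}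
    (h : IsSeparation S U V) (hf : Continuous f) : IsSeparation (f ⁻¹' S) (f ⁻¹' U) (f ⁻¹' V) where
  isOpen_left := h.isOpen_left.preimage hf
  isOpen_right := h.isOpen_right.preimage hf
  disjoint := h.disjoint.preimage f
  union_eq := by rw [← preimage_union, h.union_eq]

theorem IsSeparation.isPreconnected_compl_right (h : IsSeparation {a, b}ᶜ U V) (hU : U.Nonempty)
    (hab : a ≠ b) (ha : IsPreconnected ({a}ᶜ : Set X)) (hb : IsPreconnected ({b}ᶜ : Set X)) :
    IsPreconnected Vᶜ := by
  obtain ⟨u, hu⟩ := hU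
  have hbU : IsPreconnected (insert b U) := isPreconnected_insert_left (C := {a}ᶜ) (V := V)
    (by rwa [sdiff_eq, ← compl_union, singleton_union]) ha hab.symm
  have haU : IsPreconnected (insert a U) := isPreconnected_insert_left (C := {b}ᶜ) (V := V)
    (by rwa [sdiff_eq, ← compl_union, singleton_union, pair_comm]) hb hab
  convert hbU.union u (.inr hu) (.inr hu) haU using 1
  rw [h.symm.compl_left, compl_compl]
  grind

theorem IsSeparation.insert_right_subset_of_pair_subset (h : IsSeparation {a, b}ᶜ U V)
    (hG : IsSeparation {p, q}ᶜ G₁ G₂) (hq : IsPreconnected ({q}ᶜ : Set X)) (hpq : p ≠ q)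
    (hp : p ∈ U) (hab : {a, b} ⊆ G₁) : insert p G₂ ⊆ U := by
  have hpG₂ : IsPreconnected (insert p G₂) := isPreconnected_insert_right (C := {q}ᶜ) (U := G₁)
    (by rwa [sdiff_eq, ← compl_union, singleton_union, pair_comm]) hq hpq
  refine hpG₂.subset_left_of_subset_union h.isOpen_left h.isOpen_right h.disjoint ?_
    ⟨p, mem_insert p G₂, hp⟩
  rw [h.union_eq]
  exact insert_subset (h.subset_left hp) (hG.disjoint.symm.mono_right hab).subset_compl_right

theorem IsSeparation.not_pair_subset_left (h : IsSeparation {a, b}ᶜ U V)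
    (hG : IsSeparation {p, q}ᶜ G₁ G₂) (hG₂ : G₂.Nonempty) (hp : IsPreconnected ({p}ᶜ : Set X))
    (hq : IsPreconnected ({q}ᶜ : Set X)) (hpU : p ∈ U) (hqV : q ∈ V) : ¬{a, b} ⊆ G₁ := fun hab ↦ by
  obtain ⟨z, hz⟩ := hG₂
  have hpq : p ≠ q := h.disjoint.ne_of_mem hpU hqV
  have hzU : z ∈ U := h.insert_right_subset_of_pair_subset hG hq hpq hpU hab (.inr hz)
  have hzV : z ∈ V := h.symm.insert_right_subset_of_pair_subset (pair_comm p q ▸ hG) hp hpq.symm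
    hqV hab (.inr hz)
  exact h.disjoint.notMem_of_mem_left hzU hzV

theorem IsSeparation.exists_isSeparation_pair [T1Space X]
    (H : Pairwise fun x y : X ↦ ¬IsPreconnected ({x, y}ᶜ : Set X))
    (H' : ∀ x, IsPreconnected ({x}ᶜ : Set X)) (h : IsSeparation {a, b}ᶜ U V) (hp : p ∈ U)
    (hq : q ∈ V) : ∃ P Q, IsSeparation {p, q}ᶜ P Q ∧ a ∈ P ∧ b ∈ Q := by
  obtain ⟨G₁, G₂, hG, hG₁, hG₂⟩ := exists_isSeparation_of_not_isPreconnected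
    (toFinite {p, q}).isClosed.isOpen_compl (H (h.disjoint.ne_of_mem hp hq))
  have hG₁_not := h.not_pair_subset_left hG hG₂ (H' p) (H' q) hp hq
  have hG₂_not := h.not_pair_subset_left hG.symm hG₁ (H' p) (H' q) hp hq
  have hpab := h.subset_left hp
  have hqab := h.subset_right hq
  have ha := hG.mem_iff a
  have hb := hG.mem_iff b
  by_cases haG : a ∈ G₁
  · exact ⟨G₁, G₂, hG, haG, by grind⟩
  · exact ⟨G₂, G₁, hG.symm, by grind⟩

/-- The point `p` separates `a` from `b`: they lie in the two parts of a separation of `{p}ᶜ`. -/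
def SeparatesPoints (p a b : X) : Prop :=
  ∃ P Q, IsSeparation {p}ᶜ P Q ∧ a ∈ P ∧ b ∈ Q

theorem IsSeparation.separatesPoints_compl_right [T1Space X]
    (H : Pairwise fun x y : X ↦ ¬IsPreconnected ({x, y}ᶜ : Set X))
    (H' : ∀ x, IsPreconnected ({x}ᶜ : Set X)) (h : IsSeparation {a, b}ᶜ U V) (hV : V.Nonempty)
    (ha : a ∈ Vᶜ) (hb : b ∈ Vᶜ) (x : ↥Vᶜ) (hxa : x ≠ ⟨a, ha⟩) (hxb : x ≠ ⟨b, hb⟩) :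
    SeparatesPoints x ⟨a, ha⟩ ⟨b, hb⟩ := by
  obtain ⟨q, hq⟩ := hV
  have hxU : ↑x ∈ U := by
    have := h.mem_iff x
    grind
  obtain ⟨P, Q, hPQ, haP, hbQ⟩ := h.exists_isSeparation_pair H H' hxU hq
  have hpre : Subtype.val ⁻¹' {↑x, q}ᶜ = ({x}ᶜ : Set ↥Vᶜ) := by
    ext z
    have : ↑z ≠ q := (ne_of_mem_of_not_mem hq z.2).symm
    simp [this, Subtype.ext_iff]
  exact ⟨_, _, hpre ▸ hPQ.preimage continuous_subtype_val, haP, hbQ⟩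

end Separation

theorem eq_of_le_of_compactSpace_of_t2Space {X : Type*} {t₁ t₂ : TopologicalSpace X}
    (h : t₁ ≤ t₂) [@CompactSpace X t₁] [@T2Space X t₂] : t₁ = t₂ := by
  have hid : @IsHomeomorph X X t₁ t₂ id :=
    (@isHomeomorph_iff_continuous_bijective X X t₁ t₂ id _ _).mpr
      ⟨continuous_id_iff_le.mpr h, Function.bijective_id⟩
  exact h.antisymm fun s hs ↦ image_id s ▸ (@IsHomeomorph.isOpenMap X X t₁ t₂ id hid) s hs

theorem orderTopology_of_isOpen_Iio_Ioi {X : Type*} [t : TopologicalSpace X] [CompactSpace X]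
    [LinearOrder X] (hIio : ∀ p : X, IsOpen (Iio p)) (hIoi : ∀ p : X, IsOpen (Ioi p)) :
    OrderTopology X := by
  have hle : t ≤ Preorder.topology X := by
    refine le_generateFrom ?_
    rintro _ ⟨p, rfl | rfl⟩
    exacts [hIoi p, hIio p]
  have : @T2Space X (Preorder.topology X) :=
    let _ := Preorder.topology X
    have : OrderTopology X := ⟨rfl⟩
    inferInstance
  exact ⟨eq_of_le_of_compactSpace_of_t2Space hle⟩

section CutOrder

variable {X : Type*} [TopologicalSpace X] {a b p q : X} {L R : X → Set X}

/-- For every point `p` a separation `{p}ᶜ = L p ∪ R p` with `a` weakly on the left of `p` and `b`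
weakly on the right: the initial and final segments of an order with endpoints `a` and `b`. -/
structure IsCutFamily (a b : X) (L R : X → Set X) : Prop where
  isSeparation (p : X) : IsSeparation {p}ᶜ (L p) (R p)
  left_mem (p : X) : a ∈ insert p (L p)
  right_mem (p : X) : b ∈ insert p (R p)

theorem exists_isCutFamily [T1Space X] (hab : a ≠ b)
    (h : ∀ p, p ≠ a → p ≠ b → SeparatesPoints p a b) : ∃ L R, IsCutFamily a b L R := by
  have hcut (p : X) : ∃ P Q, IsSeparation {p}ᶜ P Q ∧ a ∈ insert p P ∧ b ∈ insert p Q := by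
    have hempty : IsSeparation {p}ᶜ ∅ {p}ᶜ :=
      ⟨isOpen_empty, isOpen_compl_singleton, empty_disjoint _, empty_union _⟩
    rcases eq_or_ne p a with rfl | hpa
    · exact ⟨∅, {p}ᶜ, hempty, mem_insert _ _, .inr hab.symm⟩
    rcases eq_or_ne p b with rfl | hpb
    · exact ⟨{p}ᶜ, ∅, hempty.symm, .inr hab, mem_insert _ _⟩
    obtain ⟨P, Q, hPQ, ha, hb⟩ := h p hpa hpb
    exact ⟨P, Q, hPQ, .inr ha, .inr hb⟩
  choose L R hsep ha hb using hcut
  exact ⟨L, R, hsep, ha, hb⟩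

namespace IsCutFamily

protected theorem symm (h : IsCutFamily a b L R) : IsCutFamily b a R L :=
  ⟨fun p ↦ (h.isSeparation p).symm, h.right_mem, h.left_mem⟩

theorem notMem_left (h : IsCutFamily a b L R) (p : X) : p ∉ L p :=
  fun hp ↦ (h.isSeparation p).subset_left hp rfl

variable [PreconnectedSpace X]

theorem insert_left_subset (h : IsCutFamily a b L R) (hq : q ∈ R p) : insert p (L p) ⊆ L q := by
  refine (h.isSeparation p).insert_left_subset (h.isSeparation q) hq ⟨a, h.left_mem p, ?_⟩
  refine (h.left_mem q).resolve_left fun haq ↦ ?_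
  subst haq
  exact (h.left_mem p).elim (fun hap ↦ h.symm.notMem_left p (hap ▸ hq))
    fun haL ↦ (h.isSeparation p).disjoint.notMem_of_mem_left haL hq

theorem mem_left_iff (h : IsCutFamily a b L R) : p ∈ L q ↔ q ∈ R p :=
  ⟨fun hp ↦ h.symm.insert_left_subset hp (mem_insert _ _),
    fun hq ↦ h.insert_left_subset hq (mem_insert _ _)⟩

theorem isStrictTotalOrder (h : IsCutFamily a b L R) :
    IsStrictTotalOrder X fun p q ↦ p ∈ L q where
  irrefl := h.notMem_left
  trans _ _ _ hpq hqr := h.insert_left_subset (h.mem_left_iff.mp hqr) (.inr hpq)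
  trichotomous p q hpq hqp := by
    by_contra hne
    exact (((h.isSeparation q).mem_iff p).mp hne).elim hpq fun hp ↦ hqp (h.mem_left_iff.mpr hp)

end IsCutFamily

theorem exists_linearOrder_orderTopology_of_separatesPoints [CompactSpace X] [T1Space X]
    [PreconnectedSpace X] (hab : a ≠ b) (h : ∀ p, p ≠ a → p ≠ b → SeparatesPoints p a b) :
    ∃ _ : LinearOrder X, OrderTopology X ∧ IsBot a ∧ IsTop b := by
  classical
  obtain ⟨L, R, hLR⟩ := exists_isCutFamily hab h
  have := hLR.isStrictTotalOrder
  let _ : LinearOrder X := linearOrderOfSTO fun p q ↦ p ∈ L q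
  have hIoi (p : X) : Ioi p = R p := ext fun q ↦ hLR.mem_left_iff
  refine ⟨inferInstance, orderTopology_of_isOpen_Iio_Ioi
    (fun p ↦ (hLR.isSeparation p).isOpen_left)
    (fun p ↦ hIoi p ▸ (hLR.isSeparation p).isOpen_right), fun p ↦ ?_, fun p ↦ ?_⟩
  · exact hLR.left_mem p
  · exact (hLR.right_mem p).imp Eq.symm hLR.mem_left_iff.mpr

end CutOrder

section DenseOrder

variable {X Y : Type*} [TopologicalSpace X] [LinearOrder X] [OrderTopology X] [DenselyOrdered X]

theorem nonempty_orderIso_of_dense [CompactSpace X] [TopologicalSpace Y] [CompleteLinearOrder Y]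
    [OrderTopology Y] [DenselyOrdered Y] {D : Set X} {E : Set Y} (hD : Dense D) (hE : Dense E)
    (φ : D ≃o E) : Nonempty (X ≃o Y) := by
  let f (x : X) : Y := ⨆ d : {d : D // ↑d < x}, ↑(φ d)
  have le_f (x : X) (d : D) (hd : ↑d < x) : ↑(φ d) ≤ f x :=
    le_iSup (fun d : {d : D // ↑d < x} ↦ (φ d : Y)) ⟨d, hd⟩
  have f_le (x : X) (d : D) (hd : x ≤ ↑d) : f x ≤ φ d :=
    iSup_le fun e ↦ φ.monotone (e.2.le.trans hd)
  have f_strictMono : StrictMono f := fun x y hxy ↦ by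
    obtain ⟨e, he, hxe, hey⟩ := hD.exists_between hxy
    obtain ⟨d, hd, hxd, hde⟩ := hD.exists_between hxe
    calc f x ≤ φ ⟨d, hd⟩ := f_le x _ hxd.le
      _ < φ ⟨e, he⟩ := φ.strictMono hde
      _ ≤ f y := le_f y _ hey
  have f_extends (d : D) : f d = φ d := by
    refine (f_le d d le_rfl).antisymm (le_of_not_gt fun hlt ↦ ?_)
    obtain ⟨e, he, hfe, hed⟩ := hE.exists_between hlt
    have hlt_d : φ.symm ⟨e, he⟩ < d := φ.symm_apply_lt.mpr hed
    exact hfe.not_ge (by simpa using le_f d _ hlt_d)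
  have hf_dense : DenseRange f := hE.mono fun e he ↦
    ⟨φ.symm ⟨e, he⟩, by rw [f_extends, φ.apply_symm_apply]⟩
  have hf_cont : Continuous f := f_strictMono.monotone.continuous_of_denseRange hf_dense
  have hf_surj : Function.Surjective f := by
    rw [← range_eq_univ, ← (isCompact_range hf_cont).isClosed.closure_eq]
    exact hf_dense.closure_eq
  exact ⟨f_strictMono.orderIsoOfSurjective f hf_surj⟩

theorem exists_countable_dense_noMinOrder_noMaxOrder [SeparableSpace X] [Nontrivial X] :
    ∃ D : Set X, D.Countable ∧ Dense D ∧ Nonempty D ∧ DenselyOrdered D ∧ NoMinOrder D ∧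
      NoMaxOrder D := by
  obtain ⟨D, hD_countable, hD, hbot, htop⟩ := exists_countable_dense_no_bot_top X
  refine ⟨D, hD_countable, hD, hD.nonempty.to_subtype, ⟨fun d e hde ↦ ?_⟩, ⟨fun d ↦ ?_⟩,
    ⟨fun d ↦ ?_⟩⟩
  · obtain ⟨c, hc, hdc, hce⟩ := hD.exists_between hde
    exact ⟨⟨c, hc⟩, hdc, hce⟩
  · have hd : ¬IsBot (d : X) := fun h ↦ hbot d h d.2
    obtain ⟨x, hx⟩ : ∃ x, x < (d : X) := by simpa only [IsBot, not_forall, not_le] using hd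
    obtain ⟨c, hc, -, hcd⟩ := hD.exists_between hx
    exact ⟨⟨c, hc⟩, hcd⟩
  · have hd : ¬IsTop (d : X) := fun h ↦ htop d h d.2
    obtain ⟨x, hx⟩ : ∃ x, (d : X) < x := by simpa only [IsTop, not_forall, not_le] using hd
    obtain ⟨c, hc, hdc, -⟩ := hD.exists_between hx
    exact ⟨⟨c, hc⟩, hdc⟩

theorem nonempty_orderIso_of_separableSpace [CompactSpace X] [SeparableSpace X] [Nontrivial X]
    [TopologicalSpace Y] [CompleteLinearOrder Y] [OrderTopology Y] [DenselyOrdered Y]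
    [SeparableSpace Y] [Nontrivial Y] : Nonempty (X ≃o Y) := by
  obtain ⟨D, hD_countable, hD, _, _, _, _⟩ := exists_countable_dense_noMinOrder_noMaxOrder (X := X)
  obtain ⟨E, hE_countable, hE, _, _, _, _⟩ := exists_countable_dense_noMinOrder_noMaxOrder (X := Y)
  have := hD_countable.to_subtype
  have := hE_countable.to_subtype
  obtain ⟨φ⟩ := Order.iso_of_countable_dense D E
  exact nonempty_orderIso_of_dense hD hE φ

end DenseOrder

section Arc

variable {X : Type*} [TopologicalSpace X] {a b : X}

theorem exists_homeomorph_unitInterval_of_separatesPoints [CompactSpace X] [T1Space X]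
    [PreconnectedSpace X] [SeparableSpace X] (hab : a ≠ b)
    (h : ∀ p, p ≠ a → p ≠ b → SeparatesPoints p a b) :
    ∃ e : unitInterval ≃ₜ X, e 0 = a ∧ e 1 = b := by
  obtain ⟨_, _, ha, hb⟩ := exists_linearOrder_orderTopology_of_separatesPoints hab h
  have : DenselyOrdered X := denselyOrdered_of_preconnectedSpace
  have : Nontrivial X := ⟨a, b, hab⟩
  obtain ⟨e⟩ := nonempty_orderIso_of_separableSpace (X := X) (Y := unitInterval)
  refine ⟨e.symm.toHomeomorph, ?_, ?_⟩
  · exact (ha _).antisymm' (e.symm_apply_le.mpr unitInterval.nonneg')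
  · exact (hb _).antisymm (e.le_symm_apply.mpr unitInterval.le_one')

theorem separableSpace_subtype_of_isOpen [SeparableSpace X] {S U : Set X} (hU : IsOpen U)
    (hUS : U ⊆ S) (hdiff : (S \ U).Countable) : SeparableSpace S := by
  obtain ⟨D, hD_countable, hD⟩ := exists_countable_dense X
  refine ⟨Subtype.val ⁻¹' (D ∪ S \ U), ?_, ?_⟩
  · exact (hD_countable.union hdiff).preimage Subtype.val_injective
  · rw [Subtype.dense_iff]
    intro x hx
    rw [Subtype.image_preimage_coe]
    by_cases hxU : x ∈ U
    · refine closure_mono ?_ (hD.open_subset_closure_inter hU hxU)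
      exact fun y hy ↦ ⟨hUS hy.1, .inl hy.2⟩
    · exact subset_closure ⟨hx, .inr ⟨hx, hxU⟩⟩

theorem IsSeparation.exists_path_range_eq_compl_right [CompactSpace X] [T1Space X]
    [SeparableSpace X] (H : Pairwise fun x y : X ↦ ¬IsPreconnected ({x, y}ᶜ : Set X))
    (H' : ∀ x, IsPreconnected ({x}ᶜ : Set X)) {U V : Set X} (h : IsSeparation {a, b}ᶜ U V)
    (hab : a ≠ b) (hU : U.Nonempty) (hV : V.Nonempty) :
    ∃ γ : Path a b, Function.Injective γ ∧ range γ = Vᶜ := by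
  have ha : a ∈ Vᶜ := fun haV ↦ h.subset_right haV (.inl rfl)
  have hb : b ∈ Vᶜ := fun hbV ↦ h.subset_right hbV (.inr rfl)
  have : CompactSpace ↥Vᶜ :=
    isCompact_iff_compactSpace.mp h.isOpen_right.isClosed_compl.isCompact
  have : PreconnectedSpace ↥Vᶜ :=
    Subtype.preconnectedSpace (h.isPreconnected_compl_right hU hab (H' a) (H' b))
  have : SeparableSpace ↥Vᶜ := by
    refine separableSpace_subtype_of_isOpen h.isOpen_left h.disjoint.subset_compl_right ?_
    refine (toFinite {a, b}).countable.mono ?_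
    rw [h.symm.compl_left, compl_compl, union_sdiff_right]
    exact sdiff_subset
  obtain ⟨e, he₀, he₁⟩ := exists_homeomorph_unitInterval_of_separatesPoints
    (a := (⟨a, ha⟩ : ↥Vᶜ)) (b := ⟨b, hb⟩) (Subtype.coe_ne_coe.mp hab)
    (h.separatesPoints_compl_right H H' hV ha hb)
  refine ⟨⟨⟨fun t ↦ e t, by fun_prop⟩, by simp [he₀], by simp [he₁]⟩,
    Subtype.val_injective.comp e.injective, ?_⟩
  change range (Subtype.val ∘ e) = Vᶜ
  rw [range_comp, e.range_coe, image_univ, Subtype.range_coe]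

end Arc

section Circle

variable {X : Type*} [TopologicalSpace X] {a b : X}

theorem nonempty_homeomorph_addCircle_of_bijOn [T2Space X] {p c : ℝ} [Fact (0 < p)] {f : ℝ → X}
    (hf : ContinuousOn f (Icc c (c + p))) (hends : f c = f (c + p))
    (hbij : BijOn f (Ico c (c + p)) univ) : Nonempty (AddCircle p ≃ₜ X) := by
  have hcont : Continuous (AddCircle.liftIco p c f) := AddCircle.liftIco_continuous hends hf
  have hrestrict : Function.Bijective ((Ico c (c + p)).domRestrict f) :=
    ⟨injOn_iff_injective.mp hbij.injOn, surjOn_iff_surjective.mp hbij.surjOn⟩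
  have hlift : Function.Bijective (AddCircle.liftIco p c f) :=
    hrestrict.comp (AddCircle.equivIco p c).bijective
  exact ⟨hcont.homeoOfEquivCompactToT2 (f := .ofBijective _ hlift)⟩

/-- The loop, parametrized by `[-1, 1]`, that runs backwards along `γ₂` from `b` to `a` and then
along `γ₁` from `a` to `b`. -/
noncomputable def gluedLoop (γ₁ γ₂ : Path a b) (t : ℝ) : X :=
  if 0 ≤ t then γ₁.extend t else γ₂.extend (-t)

variable {γ₁ γ₂ : Path a b} {s t : ℝ}

theorem gluedLoop_of_nonneg (ht : 0 ≤ t) : gluedLoop γ₁ γ₂ t = γ₁.extend t := if_pos ht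

theorem gluedLoop_of_nonpos (ht : t ≤ 0) : gluedLoop γ₁ γ₂ t = γ₂.extend (-t) := by
  rcases ht.lt_or_eq with ht | rfl
  · exact if_neg ht.not_ge
  · simp [gluedLoop]

theorem gluedLoop_neg_one_eq_one : gluedLoop γ₁ γ₂ (-1) = gluedLoop γ₁ γ₂ 1 := by
  simp [gluedLoop_of_nonpos, gluedLoop_of_nonneg]

theorem continuous_gluedLoop : Continuous (gluedLoop γ₁ γ₂) := by
  refine Continuous.if_le γ₁.continuous_extend (γ₂.continuous_extend.comp continuous_neg)
    continuous_const continuous_id ?_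
  rintro _ rfl
  simp

theorem surjOn_gluedLoop (hunion : range γ₁ ∪ range γ₂ = univ) :
    SurjOn (gluedLoop γ₁ γ₂) (Ico (-1) 1) univ := by
  intro x _
  rcases hunion.ge (mem_univ x) with ⟨t, rfl⟩ | ⟨t, rfl⟩
  · rcases t.2.2.lt_or_eq with ht | ht
    · exact ⟨t, ⟨by linarith [t.2.1], ht⟩, by simp [gluedLoop_of_nonneg t.2.1]⟩
    · have ht_one : t = 1 := Subtype.ext ht
      exact ⟨-1, by simp, by simp [gluedLoop_neg_one_eq_one, gluedLoop_of_nonneg, ht_one]⟩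
  · exact ⟨-t, ⟨by linarith [t.2.2], by linarith [t.2.1]⟩,
      by simp [gluedLoop_of_nonpos (neg_nonpos.mpr t.2.1)]⟩

theorem injOn_extend_of_injective {γ : Path a b} (h : Function.Injective γ) :
    InjOn γ.extend (Icc 0 1) := fun s hs t ht hst ↦ by
  rw [γ.extend_apply hs, γ.extend_apply ht] at hst
  exact congrArg Subtype.val (h hst)

theorem gluedLoop_ne_of_neg_of_nonneg (h₁ : Function.Injective γ₁) (h₂ : Function.Injective γ₂)
    (hinter : range γ₁ ∩ range γ₂ ⊆ {a, b}) (hs : s ∈ Ico (-1) 0) (ht : t ∈ Ico 0 1) :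
    gluedLoop γ₁ γ₂ s ≠ gluedLoop γ₁ γ₂ t := fun hst ↦ by
  have hs' : -s ∈ Icc (0 : ℝ) 1 := ⟨by linarith [hs.2], by linarith [hs.1]⟩
  have ht' : t ∈ Icc (0 : ℝ) 1 := Ico_subset_Icc_self ht
  rw [gluedLoop_of_nonpos hs.2.le, gluedLoop_of_nonneg ht.1] at hst
  have hmem : γ₁.extend t ∈ ({a, b} : Set X) :=
    hinter ⟨γ₁.extend_range ▸ mem_range_self t, hst ▸ γ₂.extend_range ▸ mem_range_self (-s)⟩
  rcases hmem with ha | hb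
  · have : -s = 0 := injOn_extend_of_injective h₂ hs' (by simp) (by simpa [ha] using hst)
    linarith [hs.2]
  · have : t = 1 := injOn_extend_of_injective h₁ ht' (by simp) (by simpa using hb)
    exact ht.2.ne this

theorem injOn_gluedLoop (h₁ : Function.Injective γ₁) (h₂ : Function.Injective γ₂)
    (hinter : range γ₁ ∩ range γ₂ ⊆ {a, b}) : InjOn (gluedLoop γ₁ γ₂) (Ico (-1) 1) := by
  rw [← Ico_union_Ico_eq_Ico (by simp : (-1 : ℝ) ≤ 0) zero_le_one,
    injOn_union Ico_disjoint_Ico_same]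
  refine ⟨fun s hs t ht hst ↦ ?_, fun s hs t ht hst ↦ ?_, fun s hs t ht ↦
    gluedLoop_ne_of_neg_of_nonneg h₁ h₂ hinter hs ht⟩
  · rw [gluedLoop_of_nonpos hs.2.le, gluedLoop_of_nonpos ht.2.le] at hst
    exact neg_injective (injOn_extend_of_injective h₂
      ⟨by linarith [hs.2], by linarith [hs.1]⟩ ⟨by linarith [ht.2], by linarith [ht.1]⟩ hst)
  · rw [gluedLoop_of_nonneg hs.1, gluedLoop_of_nonneg ht.1] at hst
    exact injOn_extend_of_injective h₁ (Ico_subset_Icc_self hs) (Ico_subset_Icc_self ht) hst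

theorem nonempty_homeomorph_circle1_of_paths [T2Space X] (h₁ : Function.Injective γ₁)
    (h₂ : Function.Injective γ₂) (hunion : range γ₁ ∪ range γ₂ = univ)
    (hinter : range γ₁ ∩ range γ₂ ⊆ {a, b}) : Nonempty (X ≃ₜ Circle1) := by
  have : Fact ((0 : ℝ) < 2) := ⟨two_pos⟩
  have hone : (-1 : ℝ) + 2 = 1 := by norm_num
  have hbij : BijOn (gluedLoop γ₁ γ₂) (Ico (-1) 1) univ :=
    ⟨mapsTo_univ _ _, injOn_gluedLoop h₁ h₂ hinter, surjOn_gluedLoop hunion⟩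
  obtain ⟨e⟩ := nonempty_homeomorph_addCircle_of_bijOn (p := 2) (f := gluedLoop γ₁ γ₂)
    continuous_gluedLoop.continuousOn (by rw [hone, gluedLoop_neg_one_eq_one]) (by rwa [hone])
  let φ : ℂ ≃ₜ EuclideanSpace ℝ (Fin 2) := Complex.orthonormalBasisOneI.repr.toHomeomorph
  have hφ : Circle ≃ₜ Circle1 := φ.subtype fun z ↦ by simp [φ, Submonoid.unitSphere]
  exact ⟨e.symm.trans ((AddCircle.homeomorphCircle two_ne_zero).trans hφ)⟩

theorem nonempty_homeomorph_circle1_of_pairwise [CompactSpace X] [T2Space X] [SeparableSpace X]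
    [PreconnectedSpace X] [Nontrivial X]
    (H : Pairwise fun x y : X ↦ ¬IsPreconnected ({x, y}ᶜ : Set X)) :
    Nonempty (X ≃ₜ Circle1) := by
  have H' := isPreconnected_compl_singleton_of_pairwise H
  obtain ⟨a, b, hab⟩ := exists_pair_ne X
  obtain ⟨U, V, h, hU, hV⟩ := exists_isSeparation_of_not_isPreconnected
    (toFinite {a, b}).isClosed.isOpen_compl (H hab)
  obtain ⟨γ₁, h₁, hγ₁⟩ := h.exists_path_range_eq_compl_right H H' hab hU hV
  obtain ⟨γ₂, h₂, hγ₂⟩ := h.symm.exists_path_range_eq_compl_right H H' hab hV hU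
  refine nonempty_homeomorph_circle1_of_paths h₁ h₂ ?_ ?_
  · rw [hγ₁, hγ₂, ← compl_inter, h.symm.disjoint.inter_eq, compl_empty]
  · rw [hγ₁, hγ₂, ← compl_union, h.symm.union_eq, compl_compl]

end Circle

theorem exists_non_cut_pair_general {M : Type*} [TopologicalSpace M] [CompactSpace M] [T2Space M]
    [SeparableSpace M] [ConnectedSpace M] [Nontrivial M] (hM : IsEmpty (M ≃ₜ Circle1)) :
    ∃ x y : M, x ≠ y ∧ IsConnected ({x, y}ᶜ : Set M) := by
  by_contra! hcut
  have : Infinite M :=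
    infinite_univ_iff.mp (isPreconnected_univ.infinite_of_nontrivial nontrivial_univ)
  refine not_isEmpty_iff.mpr (nonempty_homeomorph_circle1_of_pairwise fun x y hxy hconn ↦ ?_) hM
  exact hcut x y hxy ⟨(toFinite {x, y}).infinite_compl.nonempty, hconn⟩

/-- **Proposition (non-cut pairs exist).**
If `M` is a compact connected metrizable space with more than one point which is not
homeomorphic to the circle, then there are distinct points `x, y ∈ M` such that
`M ∖ {x, y}` is connected. -/
theorem exists_non_cut_pair (M : Type) [TopologicalSpace M] [CompactSpace M]
    [TopologicalSpace.MetrizableSpace M] [ConnectedSpace M] [Nontrivial M]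
    (hnotcircle : IsEmpty (M ≃ₜ Circle1)) :
    ∃ x y : M, x ≠ y ∧ IsConnected ({x, y}ᶜ : Set M) := by
  let _ := metrizableSpaceMetric M
  exact exists_non_cut_pair_general hnotcircle
end
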